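/- Let m:ℕ→ℕ satisfy n ≤ m(n) ≤ 3n−6 for all sufficiently large n. Then liminf_{n→∞} (|𝒫(n,m(n))|/n!)^{1/n} ≥ e. -/

import Mathlib

/-!
The lower bound comes from an explicit family of planar graphs. Fix `s`. Start with a triangle,
stack about `(m - n) / 2` vertices one after the other, each joined to the three corners of the
current triangle and then replacing one of these corners (three choices), and arrange the remaining
vertices in layers of size `s`, each joined to one of the `s` vertices of the preceding layer
(`s` choices). Label such a graph in all `n!` ways. A labelled graph together with its initial
triangle determines the layers, since a vertex is recognised by the number of its neighbours in
earlier layers; so it arises in only about `s! ^ (n / s)` ways up to polynomial factors. As `3 > e`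
and `s ^ s / s!` is `e ^ s` up to a polynomial factor, the `n`-th root of the count divided by `n!`
is at least `r` in the limit for each `r < e`, once `s` is large enough. If `m - n` is odd, one edge
is deleted from a graph with `m + 1` edges, which costs a factor of at most `n ^ 2`.

The `liminf` of a real sequence is meaningful only if the sequence does not tend to infinity, so an
exponential upper bound for `|𝒫(n,m)| / n!` is needed as well; it holds for all graphs without a
`K_t`-minor. By Mader's argument such graphs have linearly many edges, so in a large one a positive
fraction of the vertices can be grouped in disjoint pairs, each consisting of two adjacent vertices
or of two vertices with the same neighbours. Merging the pairs leaves a smaller graph without a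
`K_t`-minor, and the original is a subgraph of the graph obtained from it by doubling each vertex.
That graph has linearly many edges, so exponentially many subgraphs, and induction on the number
of vertices gives exponentially many isomorphism types in all.
-/

open SimpleGraph Filter Asymptotics

/-- `H` is a minor of `G`: to each vertex of `H` we can assign a connected nonempty
branch set in `G`, pairwise disjoint, with an edge of `G` between the branch sets of
any two adjacent vertices of `H`. -/
def IsMinor {α β : Type*} (H : SimpleGraph α) (G : SimpleGraph β) : Prop :=
  ∃ f : α → Set β,
    (∀ a, (G.induce (f a)).Connected) ∧
    (∀ a b, a ≠ b → Disjoint (f a) (f b)) ∧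
    (∀ a b, H.Adj a b → ∃ u ∈ f a, ∃ v ∈ f b, G.Adj u v)

/-- A graph is planar iff it has neither a `K₅`-minor nor a `K₃,₃`-minor
(Wagner's theorem). -/
def IsPlanar {V : Type*} (G : SimpleGraph V) : Prop :=
  ¬ IsMinor (completeGraph (Fin 5)) G ∧
    ¬ IsMinor (completeBipartiteGraph (Fin 3) (Fin 3)) G

/-- The number of edges of a graph. -/
noncomputable def edgeCount {V : Type*} (G : SimpleGraph V) : ℕ :=
  G.edgeSet.ncard

/-- The degree of a vertex. -/
noncomputable def vertexDegree {V : Type*} (G : SimpleGraph V) (v : V) : ℕ :=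
  (G.neighborSet v).ncard

/-- `𝒫(n,m)`: the set of labelled planar graphs on `{1,…,n}` with exactly `m` edges. -/
def planarSet (n m : ℕ) : Set (SimpleGraph (Fin n)) :=
  {G | IsPlanar G ∧ edgeCount G = m}

/-- The probability that the uniform random planar graph `P_{n,m}` satisfies `P`. -/
noncomputable def planarProb (n m : ℕ) (P : SimpleGraph (Fin n) → Prop) : ℝ :=
  ({G ∈ planarSet n m | P G}.ncard : ℝ) / ((planarSet n m).ncard : ℝ)

/-- The number of pendant edges (edges incident to a vertex of degree 1). -/
noncomputable def pendantCount {V : Type*} (G : SimpleGraph V) : ℕ :=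
  {e ∈ G.edgeSet | ∃ v ∈ e, vertexDegree G v = 1}.ncard

/-- The set of addable non-edges of `G`: non-edges whose addition keeps the graph planar. -/
def addableSet {V : Type*} (G : SimpleGraph V) : Set (Sym2 V) :=
  {e | ¬ e.IsDiag ∧ e ∉ G.edgeSet ∧ IsPlanar (G ⊔ SimpleGraph.fromEdgeSet {e})}

/-- `add(n,m)`: the minimum number of addable non-edges over all graphs in `𝒫(n,m)`. -/
noncomputable def addMin (n m : ℕ) : ℕ :=
  sInf ((fun G => (addableSet G).ncard) '' planarSet n m)

/-- `W` carries an induced order-preserving copy of `H` in `G`: the increasing bijection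
from `{1,…,h}` to `W` is an isomorphism between `H` and the induced subgraph `G[W]`. -/
def IsOrderCopy {h n : ℕ} (H : SimpleGraph (Fin h)) (G : SimpleGraph (Fin n))
    (W : Finset (Fin n)) : Prop :=
  ∃ hW : W.card = h,
    ∀ i j : Fin h,
      H.Adj i j ↔ G.Adj ((W.orderIsoOfFin hW i : Fin n)) ((W.orderIsoOfFin hW j : Fin n))

/-- `W` is the vertex set of a connected component of `G`. -/
def IsComponent {V : Type*} (G : SimpleGraph V) (W : Finset V) : Prop :=
  (G.induce (W : Set V)).Connected ∧ ∀ v ∈ W, ∀ u, G.Adj v u → u ∈ W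

/-- The number of components of `G` admitting an order-preserving isomorphism to `H`. -/
noncomputable def numOrderComponents {h n : ℕ} (H : SimpleGraph (Fin h))
    (G : SimpleGraph (Fin n)) : ℕ :=
  {W : Finset (Fin n) | IsComponent G W ∧ IsOrderCopy H G W}.ncard

/-- The number of distinct cycles (as subgraphs, identified with their edge sets) of
length at most `k` in `S`. -/
noncomputable def cycleCountLe {V : Type*} (S : SimpleGraph V) (k : ℕ) : ℕ :=
  {E : Set (Sym2 V) | ∃ (v : V) (c : S.Walk v v),
    c.IsCycle ∧ c.length ≤ k ∧ {e | e ∈ c.edges} = E}.ncard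

/-! ### Minor models -/

section MinorModels

variable {V W α β : Type*}

/-- `S` is nonempty and induces a connected subgraph of `G`. Connectedness is phrased through cuts,
which behave well under the operations on vertex sets used with minors. -/
def ConnectedOn (G : SimpleGraph V) (S : Set V) : Prop :=
  S.Nonempty ∧ ∀ A ⊆ S, A.Nonempty → (S \ A).Nonempty → ∃ u ∈ A, ∃ v ∈ S \ A, G.Adj u v

lemma connected_induce_iff_connectedOn {G : SimpleGraph V} {S : Set V} :
    (G.induce S).Connected ↔ ConnectedOn G S := by
  constructor
  · refine fun h ↦ ⟨Set.nonempty_coe_sort.1 h.nonempty, ?_⟩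
    rintro A hA ⟨a, ha⟩ ⟨b, hb, hbA⟩
    obtain ⟨p⟩ := h.preconnected ⟨a, hA ha⟩ ⟨b, hb⟩
    obtain ⟨d, -, hd₁, hd₂⟩ := p.exists_boundary_dart {x | x.1 ∈ A} ha hbA
    exact ⟨d.fst, hd₁, d.snd, ⟨d.snd.2, hd₂⟩, d.adj⟩
  · rintro ⟨⟨a, ha⟩, hcut⟩
    refine connected_iff_exists_forall_reachable _ |>.2 ⟨⟨a, ha⟩, ?_⟩
    by_contra! ⟨w, hw⟩
    obtain ⟨u, ⟨hu, hau⟩, v, ⟨hv, hav⟩, huv⟩ :=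
      hcut {x | ∃ hx : x ∈ S, (G.induce S).Reachable ⟨a, ha⟩ ⟨x, hx⟩} (fun x hx ↦ hx.1)
        ⟨a, ha, .rfl⟩ ⟨w, w.2, fun hx ↦ hw hx.2⟩
    exact hav ⟨hv, hau.trans (Adj.reachable huv)⟩

lemma connectedOn_of_center {G : SimpleGraph V} {S : Set V} {c : V} (hc : c ∈ S)
    (h : ∀ x ∈ S, x ≠ c → G.Adj c x) : ConnectedOn G S := by
  refine ⟨⟨c, hc⟩, ?_⟩
  rintro A hA ⟨a, ha⟩ ⟨b, hb, hbA⟩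
  by_cases hcA : c ∈ A
  · exact ⟨c, hcA, b, ⟨hb, hbA⟩, h b hb (ne_of_mem_of_not_mem hcA hbA).symm⟩
  · exact ⟨a, ha, c, ⟨hc, hcA⟩, (h a (hA ha) (ne_of_mem_of_not_mem ha hcA)).symm⟩

lemma connectedOn_singleton (G : SimpleGraph V) (v : V) : ConnectedOn G {v} :=
  connectedOn_of_center (c := v) rfl fun _ hx hne ↦ absurd hx hne

lemma ConnectedOn.biUnion {H : SimpleGraph W} {G : SimpleGraph V} {g : W → Set V} {S : Set W}
    (hS : ConnectedOn H S) (hg : ∀ w, ConnectedOn G (g w))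
    (hadj : ∀ x y, H.Adj x y → ∃ u ∈ g x, ∃ v ∈ g y, G.Adj u v) :
    ConnectedOn G (⋃ w ∈ S, g w) := by
  obtain ⟨⟨w₀, hw₀⟩, hcut⟩ := hS
  refine ⟨(hg w₀).1.mono (Set.subset_biUnion_of_mem hw₀), ?_⟩
  rintro A hA ⟨a, ha⟩ ⟨b, hb, hbA⟩
  obtain ⟨wa, hwa, haw⟩ := Set.mem_iUnion₂.1 (hA ha)
  obtain ⟨wb, hwb, hbw⟩ := Set.mem_iUnion₂.1 hb
  by_cases hsplit : ∃ w ∈ S, (g w ∩ A).Nonempty ∧ (g w \ A).Nonempty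
  · obtain ⟨w, hw, hin, hout⟩ := hsplit
    obtain ⟨u, hu, v, hv, huv⟩ :=
      (hg w).2 (g w ∩ A) Set.inter_subset_left hin (by simpa using hout)
    exact ⟨u, hu.2, v, ⟨Set.mem_biUnion hw hv.1, fun h ↦ hv.2 ⟨hv.1, h⟩⟩, huv⟩
  · have hsub : ∀ w ∈ S, (g w ∩ A).Nonempty → g w ⊆ A := fun w hw hin ↦
      Set.sdiff_eq_empty.1 (Set.not_nonempty_iff_eq_empty.1 fun hout ↦ hsplit ⟨w, hw, hin, hout⟩)
    obtain ⟨x, hx, y, hy, hxy⟩ := hcut {w ∈ S | (g w ∩ A).Nonempty} (fun w hw ↦ hw.1)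
      ⟨wa, hwa, a, haw, ha⟩ ⟨wb, hwb, fun h ↦ hbA (hsub wb hwb h.2 hbw)⟩
    obtain ⟨u, hu, v, hv, huv⟩ := hadj x y hxy
    exact ⟨u, hsub x hx.1 hx.2 hu, v,
      ⟨Set.mem_biUnion hy.1 hv, fun h ↦ hy.2 ⟨hy.1, v, hv, h⟩⟩, huv⟩

/-- A model of the minor `K` in `G` with branch sets `f a`, all of them inside `S`. -/
structure IsMinorModel (K : SimpleGraph α) (G : SimpleGraph V) (S : Set V) (f : α → Set V) :
    Prop where
  subset : ∀ a, f a ⊆ S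
  connectedOn : ∀ a, ConnectedOn G (f a)
  disjoint : Pairwise (Function.onFun Disjoint f)
  adj : ∀ a b, K.Adj a b → ∃ u ∈ f a, ∃ v ∈ f b, G.Adj u v

lemma isMinor_iff_exists_isMinorModel {K : SimpleGraph α} {G : SimpleGraph V} :
    IsMinor K G ↔ ∃ f, IsMinorModel K G Set.univ f := by
  constructor
  · rintro ⟨f, hconn, hdisj, hadj⟩
    exact ⟨f, fun _ ↦ Set.subset_univ _, fun a ↦ connected_induce_iff_connectedOn.1 (hconn a),
      hdisj, hadj⟩
  · rintro ⟨f, -, hconn, hdisj, hadj⟩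
    exact ⟨f, fun a ↦ connected_induce_iff_connectedOn.2 (hconn a), hdisj, hadj⟩

lemma IsMinorModel.isMinor {K : SimpleGraph α} {G : SimpleGraph V} {S : Set V} {f : α → Set V}
    (hf : IsMinorModel K G S f) : IsMinor K G :=
  isMinor_iff_exists_isMinorModel.2
    ⟨f, fun _ ↦ Set.subset_univ _, hf.connectedOn, hf.disjoint, hf.adj⟩

lemma IsMinorModel.biUnion {K : SimpleGraph α} {H : SimpleGraph W} {G : SimpleGraph V} {T : Set W}
    {S : Set V} {f : α → Set W} {g : W → Set V} (hf : IsMinorModel K H T f)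
    (hg : IsMinorModel H G S g) : IsMinorModel K G S fun a ↦ ⋃ w ∈ f a, g w where
  subset _ := Set.iUnion₂_subset fun w _ ↦ hg.subset w
  connectedOn a := (hf.connectedOn a).biUnion hg.connectedOn hg.adj
  disjoint a b hab := by
    simp only [Function.onFun, Set.disjoint_iUnion_left, Set.disjoint_iUnion_right]
    exact fun x hx y hy ↦
      hg.disjoint ((hf.disjoint hab).ne_of_mem hy hx)
  adj a b hab := by
    obtain ⟨x, hx, y, hy, hxy⟩ := hf.adj a b hab
    obtain ⟨u, hu, v, hv, huv⟩ := hg.adj x y hxy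
    exact ⟨u, Set.mem_biUnion hx hu, v, Set.mem_biUnion hy hv, huv⟩

lemma IsMinor.trans {K : SimpleGraph α} {H : SimpleGraph W} {G : SimpleGraph V}
    (hKH : IsMinor K H) (hHG : IsMinor H G) : IsMinor K G := by
  obtain ⟨f, hf⟩ := isMinor_iff_exists_isMinorModel.1 hKH
  obtain ⟨g, hg⟩ := isMinor_iff_exists_isMinorModel.1 hHG
  exact (hf.biUnion hg).isMinor

lemma isMinorModel_singleton {H : SimpleGraph W} {G : SimpleGraph V} (φ : Copy H G) {S : Set V}
    (hS : ∀ w, φ w ∈ S) : IsMinorModel H G S fun w ↦ {φ w} where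
  subset w := Set.singleton_subset_iff.2 (hS w)
  connectedOn _ := connectedOn_singleton _ _
  disjoint _ _ hab := Set.disjoint_singleton.2 (φ.injective.ne hab)
  adj a b hab := ⟨φ a, rfl, φ b, rfl, φ.toHom.map_adj hab⟩

lemma isMinor_of_isContained {H : SimpleGraph W} {G : SimpleGraph V} (h : H ⊑ G) : IsMinor H G :=
  h.elim fun φ ↦ (isMinorModel_singleton φ fun _ ↦ Set.mem_univ _).isMinor

lemma IsPlanar.of_isContained {G : SimpleGraph V} {H : SimpleGraph W}
    (hG : IsPlanar G) (h : H ⊑ G) : IsPlanar H :=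
  ⟨fun hK ↦ hG.1 (hK.trans (isMinor_of_isContained h)),
    fun hK ↦ hG.2 (hK.trans (isMinor_of_isContained h))⟩

/-- The graph obtained from the subgraph of `G` induced on `S` by merging the fibres of `π`. -/
def contractOn (G : SimpleGraph V) (S : Set V) (π : V → W) : SimpleGraph W :=
  (G.induce S).map fun x : S ↦ π x

lemma contractOn_adj {G : SimpleGraph V} {S : Set V} {π : V → W} {a b : W} :
    (contractOn G S π).Adj a b ↔ a ≠ b ∧ ∃ u ∈ S, ∃ v ∈ S, G.Adj u v ∧ π u = a ∧ π v = b := by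
  rw [contractOn, map_adj']
  refine and_congr_right fun _ ↦ ⟨?_, ?_⟩
  · rintro ⟨u, v, huv, hu, hv⟩
    exact ⟨u, u.2, v, v.2, huv, hu, hv⟩
  · rintro ⟨u, huS, v, hvS, huv, hu, hv⟩
    exact ⟨⟨u, huS⟩, ⟨v, hvS⟩, huv, hu, hv⟩

lemma contractOn_mono (G : SimpleGraph V) {S T : Set V} {π ρ : V → W} (hST : S ⊆ T)
    (h : Set.EqOn ρ π S) : contractOn G S π ≤ contractOn G T ρ := by
  intro a b hab
  obtain ⟨hne, u, hu, v, hv, huv, rfl, rfl⟩ := contractOn_adj.1 hab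
  exact contractOn_adj.2 ⟨hne, u, hST hu, v, hST hv, huv, h hu, h hv⟩

lemma contractOn_isMinor {G : SimpleGraph V} {T S : Set V} (hTS : T ⊆ S) (π : V → T)
    (hπ : ∀ w : T, π w = w) (hstar : ∀ x ∈ S, x ≠ π x → G.Adj (π x) x) :
    IsMinor (contractOn G S π) G := by
  refine IsMinorModel.isMinor (S := S) (f := fun w ↦ {x ∈ S | π x = w}) ⟨?_, ?_, ?_, ?_⟩
  · exact fun _ x hx ↦ hx.1
  · rintro w
    refine connectedOn_of_center (c := w) ⟨hTS w.2, hπ w⟩ ?_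
    rintro x ⟨hxS, rfl⟩ hne
    exact hstar x hxS hne
  · exact fun a b hab ↦ Set.disjoint_left.2 fun x hxa hxb ↦ hab (hxa.2.symm.trans hxb.2)
  · rintro a b hab
    obtain ⟨-, u, hu, v, hv, huv, rfl, rfl⟩ := contractOn_adj.1 hab
    exact ⟨u, ⟨hu, rfl⟩, v, ⟨hv, rfl⟩, huv⟩

end MinorModels

/-! ### Linearly many edges -/

section EdgeBound

variable {V W : Type*}

lemma two_mul_edgeCount [Fintype V] (G : SimpleGraph V) :
    2 * edgeCount G = ∑ v, vertexDegree G v := by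
  classical
  simp only [edgeCount, vertexDegree, Set.ncard_eq_toFinset_card']
  exact (sum_degrees_eq_twice_card_edges G).symm

lemma vertexDegree_induce (G : SimpleGraph V) (S : Set V) (w : S) :
    vertexDegree (G.induce S) w = (G.neighborSet w ∩ S).ncard := by
  rw [vertexDegree, ← Set.ncard_image_of_injective _ Subtype.val_injective]
  congr 1
  ext x
  simp

open Classical in
/-- The retraction of `V` onto the complement of `v` that moves `v` to `u`. -/
noncomputable def moveOnto {u v : V} (huv : u ≠ v) (x : V) : ({v}ᶜ : Set V) :=
  if hx : x = v then ⟨u, huv⟩ else ⟨x, hx⟩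

open Classical in
lemma coe_moveOnto {u v : V} (huv : u ≠ v) (x : V) :
    (moveOnto huv x : V) = if x = v then u else x := by
  by_cases hx : x = v <;> simp [moveOnto, hx]

/-- The graph obtained from `G` by contracting `v` onto `u`. -/
noncomputable def contractEdge (G : SimpleGraph V) {u v : V} (huv : u ≠ v) :
    SimpleGraph ({v}ᶜ : Set V) :=
  contractOn G Set.univ (moveOnto huv)

lemma contractEdge_isMinor (G : SimpleGraph V) {u v : V} (huv : G.Adj u v) :
    IsMinor (contractEdge G huv.ne) G := by
  refine contractOn_isMinor (Set.subset_univ _) _ (fun w ↦ ?_) fun x _ hx ↦ ?_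
  · exact Subtype.ext ((coe_moveOnto _ _).trans (if_neg w.2))
  · rw [coe_moveOnto] at hx ⊢
    by_cases hxv : x = v
    · simpa [hxv] using huv
    · simp [hxv] at hx

lemma edgeCount_le_edgeCount_contractEdge [Finite V] (G : SimpleGraph V) {u v : V} (huv : u ≠ v) :
    edgeCount G ≤ edgeCount (contractEdge G huv) + ((G.commonNeighbors u v).ncard + 1) := by
  classical
  let lost : Set (Sym2 V) := insert s(u, v) ((fun w ↦ s(v, w)) '' G.commonNeighbors u v)
  have hlost : lost.ncard ≤ (G.commonNeighbors u v).ncard + 1 :=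
    (Set.ncard_insert_le _ _).trans (Nat.add_le_add_right (Set.ncard_image_le) 1)
  have hkept : (G.edgeSet \ lost).ncard ≤ edgeCount (contractEdge G huv) := by
    refine Set.ncard_le_ncard_of_injOn (Sym2.map (moveOnto huv)) ?_ ?_
    · rintro ⟨x, y⟩ ⟨hxy, hl⟩
      refine contractOn_adj.2 ⟨fun heq ↦ ?_, x, Set.mem_univ _, y, Set.mem_univ _, hxy, rfl, rfl⟩
      have hxy_ne : x ≠ y := G.ne_of_adj hxy
      replace heq : (moveOnto huv x : V) = moveOnto huv y := Subtype.ext_iff.1 heq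
      rw [coe_moveOnto, coe_moveOnto] at heq
      grind [Sym2.eq_swap]
    · rintro ⟨x, y⟩ ⟨hxy, hl⟩ ⟨x', y'⟩ ⟨hxy', hl'⟩ heq
      simp only [Sym2.map_mk, Sym2.eq_iff, Subtype.ext_iff, coe_moveOnto] at heq
      simp only [lost, Set.mem_insert_iff, Set.mem_image, mem_commonNeighbors,
        Sym2.eq_iff] at hl hl'
      simp only [mem_edgeSet] at hxy hxy'
      have := hxy.symm
      have := hxy'.symm
      have := hxy.ne
      have := hxy'.ne
      simp only [Sym2.eq_iff]
      grind
  calc edgeCount G ≤ (G.edgeSet \ lost).ncard + lost.ncard :=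
        Set.ncard_le_ncard_sdiff_add_ncard _ _
    _ ≤ _ := Nat.add_le_add hkept hlost

lemma isMinor_completeGraph_succ {G : SimpleGraph V} {v : V} {t : ℕ}
    (h : IsMinor (completeGraph (Fin t)) (G.induce (G.neighborSet v))) :
    IsMinor (completeGraph (Fin (t + 1))) G := by
  obtain ⟨g, hg⟩ := isMinor_iff_exists_isMinorModel.1 h
  obtain ⟨f, hf⟩ : ∃ f, IsMinorModel (completeGraph (Fin t)) G (G.neighborSet v) f :=
    ⟨_, hg.biUnion (isMinorModel_singleton (Copy.induce G _) Subtype.prop)⟩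
  have hv : ∀ a, v ∉ f a := fun a ha ↦ G.irrefl (hf.subset a ha)
  refine IsMinorModel.isMinor (f := Fin.cons {v} f) ⟨fun _ ↦ Set.subset_univ _, ?_, ?_, ?_⟩
  · exact Fin.cases (connectedOn_singleton _ _) hf.connectedOn
  · intro a b hab
    cases a using Fin.cases <;> cases b using Fin.cases
    · exact absurd rfl hab
    · simpa [Function.onFun] using hv _
    · simpa [Function.onFun] using hv _
    · exact hf.disjoint (ne_of_apply_ne Fin.succ hab)
  · intro a b hab
    cases a using Fin.cases <;> cases b using Fin.cases
    · exact absurd rfl hab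
    · obtain ⟨x, hx⟩ := (hf.connectedOn _).1
      exact ⟨v, rfl, x, hx, hf.subset _ hx⟩
    · obtain ⟨x, hx⟩ := (hf.connectedOn _).1
      exact ⟨x, hx, v, rfl, (hf.subset _ hx : G.Adj v x).symm⟩
    · exact hf.adj _ _ (ne_of_apply_ne Fin.succ hab)

end EdgeBound

section Mader

universe u

/-- Mader's argument: an edge in few triangles is contracted, which loses few edges; if there is no
such edge, the neighbourhood of any vertex is dense enough to contain a smaller complete minor. -/
lemma isMinor_completeGraph_of_le_edgeCount (t : ℕ) : ∀ {V : Type u} [Fintype V] [Nonempty V]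
    (G : SimpleGraph V), 2 ^ t * Fintype.card V ≤ edgeCount G →
    IsMinor (completeGraph (Fin t)) G := by
  induction t with
  | zero => exact fun _ _ ↦ ⟨fun a ↦ a.elim0, fun a ↦ a.elim0, fun a ↦ a.elim0, fun a ↦ a.elim0⟩
  | succ t ih =>
    intro V _ _ G hG
    induction hN : Fintype.card V using Nat.strong_induction_on generalizing V with
    | _ N ihN =>
    classical
    have hpos : 0 < edgeCount G := lt_of_lt_of_le (by positivity) hG
    obtain ⟨⟨v, u⟩, huv : G.Adj v u⟩ := Set.nonempty_of_ncard_ne_zero hpos.ne'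
    by_cases hsparse : ∃ x y, G.Adj x y ∧ (G.commonNeighbors x y).ncard + 1 ≤ 2 ^ (t + 1)
    · obtain ⟨x, y, hxy, hcommon⟩ := hsparse
      have hcard : Fintype.card ({y}ᶜ : Set V) + 1 = N := by
        rw [Fintype.card_compl_set, Set.card_singleton, hN]
        exact Nat.sub_add_cancel (hN ▸ Fintype.card_pos)
      have : Nonempty ({y}ᶜ : Set V) := ⟨⟨x, hxy.ne⟩⟩
      refine (ihN _ (by lia) (contractEdge G hxy.ne) ?_ rfl).trans (contractEdge_isMinor G hxy)
      have := edgeCount_le_edgeCount_contractEdge G hxy.ne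
      rw [hN, ← hcard, mul_add_one] at hG
      lia
    · push Not at hsparse
      have : Nonempty (G.neighborSet v) := ⟨⟨u, huv⟩⟩
      refine isMinor_completeGraph_succ (ih (G.induce (G.neighborSet v)) ?_)
      have hdeg : ∀ w, 2 ^ (t + 1) ≤ vertexDegree (G.induce (G.neighborSet v)) w := fun w ↦ by
        rw [vertexDegree_induce]
        exact Nat.le_of_lt_succ (hsparse w v w.2.symm)
      have := two_mul_edgeCount (G.induce (G.neighborSet v)) ▸
        Finset.card_nsmul_le_sum Finset.univ _ _ fun w _ ↦ hdeg w
      rw [smul_eq_mul, Finset.card_univ, pow_succ] at this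
      lia

end Mader

section CompleteMinorFree

variable {V W : Type*} {t : ℕ}

/-- `G` has no minor `K_t`. -/
def CompleteMinorFree (t : ℕ) (G : SimpleGraph V) : Prop :=
  ¬ IsMinor (completeGraph (Fin t)) G

lemma CompleteMinorFree.of_isMinor {G : SimpleGraph V} {H : SimpleGraph W}
    (hG : CompleteMinorFree t G) (h : IsMinor H G) : CompleteMinorFree t H :=
  fun h' ↦ hG (h'.trans h)

lemma CompleteMinorFree.edgeCount_le [Fintype V] {G : SimpleGraph V} (hG : CompleteMinorFree t G) :
    edgeCount G ≤ 2 ^ t * Fintype.card V := by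
  rcases isEmpty_or_nonempty V with h | h
  · simp [edgeCount, Subsingleton.elim G ⊥]
  · exact (not_le.1 (hG ∘ isMinor_completeGraph_of_le_edgeCount t G)).le

lemma CompleteMinorFree.exists_vertexDegree_le [Finite V] [Nonempty V] {G : SimpleGraph V}
    (hG : CompleteMinorFree t G) : ∃ v, vertexDegree G v ≤ 2 ^ (t + 1) := by
  have := Fintype.ofFinite V
  by_contra! hdeg
  have hsum := Finset.sum_lt_sum_of_nonempty Finset.univ_nonempty fun v _ ↦ hdeg v
  rw [← two_mul_edgeCount, Finset.sum_const, Finset.card_univ, smul_eq_mul, pow_succ] at hsum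
  have := hG.edgeCount_le
  lia

end CompleteMinorFree

/-! ### Compression -/

section Compression

variable {V : Type*} {t : ℕ}

/-- `G` is `d`-degenerate: every nonempty vertex set `S` contains a vertex with at most `d`
neighbours in `S`. -/
def IsDegenerate (d : ℕ) (G : SimpleGraph V) : Prop :=
  ∀ S : Set V, S.Nonempty → ∃ v ∈ S, (G.neighborSet v ∩ S).ncard ≤ d

lemma CompleteMinorFree.isDegenerate [Finite V] {G : SimpleGraph V} (hG : CompleteMinorFree t G) :
    IsDegenerate (2 ^ (t + 1)) G := by
  intro S hS
  have := hS.to_subtype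
  obtain ⟨v, hv⟩ := (hG.of_isMinor
    (isMinor_of_isContained ⟨Copy.induce G S⟩)).exists_vertexDegree_le
  exact ⟨v, v.2, vertexDegree_induce G S v ▸ hv⟩

lemma IsDegenerate.ncard_cliques_le [Finite V] {G : SimpleGraph V} {d : ℕ} (hG : IsDegenerate d G)
    (S : Set V) : {T | T ⊆ S ∧ G.IsClique T}.ncard ≤ 2 ^ d * S.ncard + 1 := by
  induction hk : S.ncard generalizing S with
  | zero =>
    obtain rfl := (Set.ncard_eq_zero).1 hk
    refine (Set.ncard_le_ncard (t := {∅}) fun T hT ↦ Set.subset_empty_iff.1 hT.1).trans (by simp)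
  | succ k ih =>
    obtain ⟨v, hv, hdeg⟩ := hG S (Set.nonempty_of_ncard_ne_zero (by lia))
    have hcover : {T | T ⊆ S ∧ G.IsClique T} ⊆
        {T | T ⊆ S \ {v} ∧ G.IsClique T} ∪ insert v '' 𝒫 (G.neighborSet v ∩ S) := by
      rintro T ⟨hTS, hT⟩
      by_cases hvT : v ∈ T
      · refine Or.inr ⟨T \ {v}, fun x hx ↦ ⟨hT hvT hx.1 (Ne.symm hx.2), hTS hx.1⟩, ?_⟩
        exact Set.insert_sdiff_self_of_mem hvT
      · exact Or.inl ⟨Set.subset_sdiff_singleton hTS hvT, hT⟩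
    calc {T | T ⊆ S ∧ G.IsClique T}.ncard
        ≤ {T | T ⊆ S \ {v} ∧ G.IsClique T}.ncard
          + (insert v '' 𝒫 (G.neighborSet v ∩ S)).ncard :=
          (Set.ncard_le_ncard hcover).trans (Set.ncard_union_le _ _)
      _ ≤ 2 ^ d * k + 1 + 2 ^ d := by
          refine Nat.add_le_add (ih _ ?_) (le_trans (Set.ncard_image_le) ?_)
          · rw [Set.ncard_sdiff_singleton_of_mem hv, hk, Nat.add_sub_cancel]
          · rw [Set.ncard_powerset]
            exact Nat.pow_le_pow_right two_pos hdeg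
      _ = 2 ^ d * (k + 1) + 1 := by ring

lemma edgeCount_lt_of_le_of_adj [Finite V] {H H' : SimpleGraph V} (hle : H ≤ H') {x y : V}
    (hxy : ¬ H.Adj x y) (hxy' : H'.Adj x y) : edgeCount H < edgeCount H' :=
  Set.ncard_lt_ncard (edgeSet_ssubset_edgeSet.2 (lt_of_le_of_ne hle fun h ↦ hxy (h ▸ hxy')))

/-- The vertices of `I` are contracted one after the other onto a neighbour in `C`, skipping those
for which this creates no new edge; the neighbourhood of a skipped vertex is a clique. -/
lemma exists_contraction_onto (G : SimpleGraph V) {C : Set V} [Finite C] [Nonempty C]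
    (I : Finset V) (hIC : ∀ v ∈ I, v ∉ C) (hN : ∀ v ∈ I, G.neighborSet v ⊆ C) :
    ∃ A ⊆ I, ∃ π : V → C, (∀ w : C, π w = w) ∧ (∀ v ∈ A, G.Adj (π v) v) ∧
      A.card ≤ edgeCount (contractOn G (C ∪ A) π) ∧
      ∀ v ∈ I, v ∉ A → (contractOn G (C ∪ A) π).IsClique (Subtype.val ⁻¹' G.neighborSet v) := by
  classical
  induction I using Finset.induction with
  | empty =>
    obtain ⟨π, hπ⟩ := Subtype.val_injective.hasLeftInverse (α := C)
    exact ⟨∅, subset_rfl, π, hπ, by simp, by simp, by simp⟩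
  | insert v I hvI ih =>
    obtain ⟨hvC, hIC⟩ := Finset.forall_mem_insert _ _ _ |>.1 hIC
    obtain ⟨hNv, hN⟩ := Finset.forall_mem_insert _ _ _ |>.1 hN
    obtain ⟨A, hAI, π, hπ, hadj, hcard, hclique⟩ := ih hIC hN
    by_cases hv : (contractOn G (C ∪ A) π).IsClique (Subtype.val ⁻¹' G.neighborSet v)
    · refine ⟨A, hAI.trans (Finset.subset_insert _ _), π, hπ, hadj, hcard, fun w hw hwA ↦ ?_⟩
      obtain rfl | hw := Finset.mem_insert.1 hw
      exacts [hv, hclique w hw hwA]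
    obtain ⟨x, hvx, y, hvy, hxy, hnew⟩ : ∃ x : C, G.Adj v x ∧ ∃ y : C, G.Adj v y ∧ x ≠ y ∧
        ¬ (contractOn G (C ∪ A) π).Adj x y := by
      simpa [IsClique, Set.Pairwise] using hv
    have hvA : v ∉ A := fun h ↦ hvI (hAI h)
    have hπ' : ∀ u ∈ C ∪ A, Function.update π v x u = π u := fun u hu ↦
      Function.update_of_ne (by rintro rfl; simp_all) _ _
    have hπC : ∀ w : C, Function.update π v x w = w := fun w ↦
      (hπ' w (Or.inl w.2)).trans (hπ w)
    have hle : contractOn G (C ∪ A) π ≤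
        contractOn G (C ∪ (insert v A : Finset V)) (Function.update π v x) :=
      contractOn_mono G (Set.union_subset_union_right C (by simp)) hπ'
    refine ⟨insert v A, Finset.insert_subset_insert v hAI, Function.update π v x, hπC, ?_, ?_, ?_⟩
    · rw [Finset.forall_mem_insert]
      refine ⟨by simpa using hvx.symm, fun w hw ↦ ?_⟩
      rw [hπ' w (Or.inr hw)]
      exact hadj w hw
    · rw [Finset.card_insert_of_notMem hvA]
      refine hcard.trans_lt (edgeCount_lt_of_le_of_adj hle hnew (contractOn_adj.2 ⟨hxy, v, ?_, y,
        Or.inl y.2, hvy, Function.update_self _ _ _, hπC y⟩))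
      simp
    · intro w hw hwA
      rw [Finset.mem_insert, not_or] at hwA
      exact (hclique w (Finset.mem_of_mem_insert_of_ne hw hwA.1) hwA.2).mono hle

lemma CompleteMinorFree.card_le_of_injOn_neighborSet [Finite V] {G : SimpleGraph V}
    (hG : CompleteMinorFree t G) {C : Set V} (I : Finset V) (hIC : ∀ v ∈ I, v ∉ C)
    (hN : ∀ v ∈ I, G.neighborSet v ⊆ C) (hinj : Set.InjOn G.neighborSet I) :
    I.card ≤ (2 ^ t + 2 ^ 2 ^ (t + 1)) * C.ncard + 1 := by
  classical
  rcases C.eq_empty_or_nonempty with rfl | hC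
  · refine Finset.card_le_one.2 (fun u hu v hv ↦ hinj hu hv ?_) |>.trans (by simp)
    rw [Set.subset_empty_iff.1 (hN u hu), Set.subset_empty_iff.1 (hN v hv)]
  have := hC.to_subtype
  have := Fintype.ofFinite C
  obtain ⟨A, hAI, π, hπ, hadj, hcard, hclique⟩ := exists_contraction_onto G I hIC hN
  set H := contractOn G (C ∪ A) π
  have hH : CompleteMinorFree t H := by
    refine hG.of_isMinor (contractOn_isMinor Set.subset_union_left π hπ ?_)
    rintro v (hv | hv) hne
    · exact absurd (congrArg Subtype.val (hπ ⟨v, hv⟩)).symm hne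
    · exact hadj v hv
  have hrest : (I \ A).card ≤ 2 ^ 2 ^ (t + 1) * C.ncard + 1 := by
    rw [← Set.ncard_coe_finset, ← Nat.card_coe_set_eq C, ← Set.ncard_univ]
    refine le_trans (Set.ncard_le_ncard_of_injOn (fun v ↦ Subtype.val ⁻¹' G.neighborSet v) ?_ ?_)
      (hH.isDegenerate.ncard_cliques_le Set.univ)
    · intro v hv
      obtain ⟨hvI, hvA⟩ := Finset.mem_sdiff.1 (Finset.mem_coe.1 hv)
      exact ⟨Set.subset_univ _, hclique v hvI hvA⟩
    · intro u hu v hv huv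
      have huI := (Finset.mem_sdiff.1 (Finset.mem_coe.1 hu)).1
      have hvI := (Finset.mem_sdiff.1 (Finset.mem_coe.1 hv)).1
      rw [Set.preimage_eq_preimage' (by simpa using hN u huI) (by simpa using hN v hvI)] at huv
      exact hinj huI hvI huv
  have hA : A.card ≤ 2 ^ t * C.ncard := by
    rw [← Nat.card_coe_set_eq C, Nat.card_eq_fintype_card]
    exact hcard.trans hH.edgeCount_le
  rw [← Finset.card_sdiff_add_card_eq_card hAI]
  linarith

lemma exists_maximal_matching [Finite V] (R : SimpleGraph V) :
    ∃ (A : Finset V) (τ : V → V), Set.InjOn τ A ∧ (∀ a ∈ A, τ a ∉ A ∧ R.Adj a (τ a)) ∧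
      R.IsIndepSet (A ∪ τ '' A)ᶜ := by
  classical
  suffices hU : ∀ U : Finset V, ∃ (A : Finset V) (τ : V → V), Set.InjOn τ A ∧
      (∀ a ∈ A, τ a ∉ A ∧ R.Adj a (τ a)) ∧ R.IsIndepSet (U \ (A ∪ τ '' A)) by
    have := Fintype.ofFinite V
    simpa [Set.compl_eq_univ_sdiff] using hU Finset.univ
  intro U
  induction U using Finset.induction with
  | empty => exact ⟨∅, id, by simp, by simp, by simp [IsIndepSet]⟩
  | insert v U _ ih =>
    obtain ⟨A, τ, hinj, hA, hindep⟩ := ih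
    by_cases hv : v ∈ (A ∪ τ '' A : Set V)
    · refine ⟨A, τ, hinj, hA, ?_⟩
      rwa [Finset.coe_insert, Set.insert_sdiff_of_mem _ hv]
    by_cases hmatch : ∃ u ∈ (U : Set V) \ (A ∪ τ '' A), R.Adj v u
    · obtain ⟨u, ⟨-, hu⟩, hvu⟩ := hmatch
      have hne := hvu.ne
      simp only [Set.mem_union, Finset.mem_coe, Set.mem_image, not_or, not_exists, not_and]
        at hu hv
      refine ⟨insert v A, Function.update τ v u, ?_, by grind, hindep.mono fun x hx ↦ ?_⟩
      · intro a ha b hb hab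
        grind [Set.InjOn]
      · have hτx : ∀ a ∈ A, τ a ≠ x := fun a ha hax ↦
          hx.2 (Or.inr ⟨a, by grind, by grind⟩)
        simp only [Set.mem_sdiff, Set.mem_union, Finset.mem_coe, Set.mem_image]
        grind
    · refine ⟨A, τ, hinj, hA, ?_⟩
      rw [Finset.coe_insert, Set.insert_sdiff_of_notMem _ hv]
      refine Set.Pairwise.insert hindep fun u hu _ ↦ ⟨fun hvu ↦ ?_, fun huv ↦ ?_⟩
      exacts [hmatch ⟨u, hu, hvu⟩, hmatch ⟨u, hu, huv.symm⟩]

/-- Two distinct vertices are related if they are adjacent in `G` or twins, that is, have the same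
neighbours. -/
def adjOrTwin (G : SimpleGraph V) : SimpleGraph V where
  Adj u v := u ≠ v ∧ (G.Adj u v ∨ G.neighborSet u = G.neighborSet v)
  symm := ⟨fun _ _ h ↦ ⟨h.1.symm, h.2.imp Adj.symm Eq.symm⟩⟩
  loopless := ⟨fun _ h ↦ h.1 rfl⟩

/-- Every vertex of `H` is replaced by two adjacent copies, and every edge by all edges between the
copies of its ends. -/
def doubling (H : SimpleGraph V) : SimpleGraph (V × Bool) where
  Adj x y := x ≠ y ∧ (x.1 = y.1 ∨ H.Adj x.1 y.1)
  symm := ⟨fun _ _ h ↦ ⟨h.1.symm, h.2.imp Eq.symm Adj.symm⟩⟩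
  loopless := ⟨fun _ h ↦ h.1 rfl⟩

/-- Each matched vertex `a` is merged into `τ a`. In the minor, a twin of `τ a` that is not adjacent
to it is deleted instead, which does not change the resulting graph. -/
lemma exists_isMinor_isContained_doubling (G : SimpleGraph V) {A : Set V} {τ : V → V}
    (hinj : Set.InjOn τ A) (hA : ∀ a ∈ A, τ a ∉ A ∧ (adjOrTwin G).Adj a (τ a)) :
    ∃ G' : SimpleGraph (Aᶜ : Set V), IsMinor G' G ∧ G ⊑ doubling G' := by
  classical
  let π : V → (Aᶜ : Set V) := fun v ↦ if h : v ∈ A then ⟨τ v, (hA v h).1⟩ else ⟨v, h⟩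
  have hπ_mem : ∀ v ∈ A, (π v : V) = τ v := fun v h ↦ by simp [π, h]
  have hπ_notMem : ∀ v ∉ A, (π v : V) = v := fun v h ↦ by simp [π, h]
  let S : Set V := {v | v ∈ A → G.Adj (τ v) v}
  have hrep : ∀ u v, G.Adj u v → ∃ u' ∈ S, π u' = π u ∧ G.Adj u' v := by
    intro u v huv
    by_cases hu : u ∈ S
    · exact ⟨u, hu, rfl, huv⟩
    obtain ⟨huA, hadj⟩ := Classical.not_imp.1 hu
    have htwin := (hA u huA).2.2.resolve_left fun h ↦ hadj h.symm
    refine ⟨τ u, fun h ↦ absurd h (hA u huA).1, ?_, (htwin ▸ huv : v ∈ G.neighborSet (τ u))⟩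
    exact Subtype.ext ((hπ_notMem _ (hA u huA).1).trans (hπ_mem u huA).symm)
  have hcode : Function.Injective fun v ↦ (π v, decide (v ∈ A)) := by
    intro u v huv
    obtain ⟨hπ, hiff⟩ := Prod.ext_iff.1 huv
    have hπ' : (π u : V) = π v := congrArg Subtype.val hπ
    have hiff' : u ∈ A ↔ v ∈ A := decide_eq_decide.1 hiff
    by_cases hu : u ∈ A
    · rw [hπ_mem u hu, hπ_mem v (hiff'.1 hu)] at hπ'
      exact hinj hu (hiff'.1 hu) hπ'
    · rwa [hπ_notMem u hu, hπ_notMem v (hu ∘ hiff'.2)] at hπ'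
  have hadj : ∀ u v, G.Adj u v → π u = π v ∨ (contractOn G S π).Adj (π u) (π v) := by
    refine fun u v huv ↦ or_iff_not_imp_left.2 fun hne ↦ ?_
    obtain ⟨u', hu', hπu, huv'⟩ := hrep u v huv
    obtain ⟨v', hv', hπv, hvu'⟩ := hrep v u' huv'.symm
    exact contractOn_adj.2 ⟨hne, u', hu', v', hv', hvu'.symm, hπu, hπv⟩
  refine ⟨contractOn G S π, contractOn_isMinor (fun v hv h ↦ absurd h hv) π
    (fun w ↦ Subtype.ext (hπ_notMem w w.2)) fun v hv hne ↦ ?_,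
    ⟨⟨_, fun {u v} huv ↦ ⟨hcode.ne huv.ne, hadj u v huv⟩⟩, hcode⟩⟩
  by_cases hvA : v ∈ A
  · rw [hπ_mem v hvA]
    exact hv hvA
  · exact absurd (hπ_notMem v hvA).symm hne

/-- The factor by which `K_t`-minor-free graphs can be compressed. -/
def compressionConst (t : ℕ) : ℕ := 2 + 2 * (2 ^ t + 2 ^ 2 ^ (t + 1))

lemma CompleteMinorFree.exists_compression [Fintype V] {G : SimpleGraph V}
    (hG : CompleteMinorFree t G) :
    ∃ (A : Finset V) (G' : SimpleGraph ((A : Set V)ᶜ : Set V)), CompleteMinorFree t G' ∧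
      Fintype.card V ≤ compressionConst t * A.card + 1 ∧ G ⊑ doubling G' := by
  classical
  obtain ⟨A, τ, hinj, hA, hindep⟩ := exists_maximal_matching (adjOrTwin G)
  obtain ⟨G', hminor, hcontained⟩ := exists_isMinor_isContained_doubling G hinj hA
  refine ⟨A, G', hG.of_isMinor hminor, ?_, hcontained⟩
  let C : Finset V := A ∪ A.image τ
  have hcoe : (C : Set V) = (A : Set V) ∪ τ '' A := by simp [C]
  rw [← hcoe] at hindep
  have hI : Cᶜ.card ≤ (2 ^ t + 2 ^ 2 ^ (t + 1)) * C.card + 1 := by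
    rw [← Set.ncard_coe_finset C]
    refine hG.card_le_of_injOn_neighborSet Cᶜ (fun v hv ↦ Finset.mem_compl.1 hv) ?_ ?_
    · intro v hv w hvw
      by_contra hw
      exact hindep (by simpa using hv) hw hvw.ne ⟨hvw.ne, Or.inl hvw⟩
    · intro u hu v hv huv
      by_contra hne
      exact hindep (by simpa using hu) (by simpa using hv) hne ⟨hne, Or.inr huv⟩
  have hC : C.card ≤ 2 * A.card := by
    have := Finset.card_union_le A (A.image τ)
    have := Finset.card_image_le (s := A) (f := τ)
    lia
  have := Finset.card_add_card_compl C
  have := Nat.mul_le_mul_left (2 ^ t + 2 ^ 2 ^ (t + 1)) hC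
  rw [compressionConst]
  linarith

end Compression

/-! ### The upper bound -/

section UpperBound

variable {V W : Type*}

lemma edgeCount_map (G : SimpleGraph V) (e : V ↪ W) : edgeCount (G.map e) = edgeCount G := by
  rw [edgeCount, edgeSet_map, Set.ncard_image_of_injective _ e.sym2Map.injective, edgeCount]

lemma vertexDegree_doubling_le [Finite V] (H : SimpleGraph V) (x : V × Bool) :
    vertexDegree (doubling H) x ≤ 2 * vertexDegree H x.1 + 1 := by
  have hsub : (doubling H).neighborSet x ⊆
      insert (x.1, !x.2) (H.neighborSet x.1 ×ˢ (Set.univ : Set Bool)) := by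
    rintro y ⟨hne, heq | hadj⟩
    · refine Or.inl (Prod.ext heq.symm (Bool.eq_not.2 fun h ↦ hne (Prod.ext heq h.symm)))
    · exact Or.inr ⟨hadj, Set.mem_univ _⟩
  calc vertexDegree (doubling H) x
      ≤ (H.neighborSet x.1 ×ˢ (Set.univ : Set Bool)).ncard + 1 :=
        (Set.ncard_le_ncard hsub).trans (Set.ncard_insert_le _ _)
    _ = 2 * vertexDegree H x.1 + 1 := by
        rw [Set.ncard_prod, Set.ncard_univ, Nat.card_eq_fintype_card, Fintype.card_bool, mul_comm,
          vertexDegree]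

lemma edgeCount_doubling_le [Fintype V] (H : SimpleGraph V) :
    edgeCount (doubling H) ≤ 4 * edgeCount H + Fintype.card V := by
  have hsum : 2 * edgeCount (doubling H) ≤ ∑ x : V × Bool, (2 * vertexDegree H x.1 + 1) :=
    two_mul_edgeCount (doubling H) ▸ Finset.sum_le_sum fun x _ ↦ vertexDegree_doubling_le H x
  simp only [Fintype.sum_prod_type, Finset.sum_const, Finset.card_univ, Fintype.card_bool,
    Fintype.card_prod, smul_eq_mul, Finset.sum_add_distrib, ← Finset.mul_sum,
    ← two_mul_edgeCount] at hsum
  lia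

lemma card_add_edgeCount_doubling_le [Fintype V] {H : SimpleGraph V} {d : ℕ}
    (hH : edgeCount H ≤ d * Fintype.card V) :
    Fintype.card (V × Bool) + edgeCount (doubling H) ≤ (3 + 4 * d) * Fintype.card V := by
  have := edgeCount_doubling_le H
  rw [Fintype.card_prod, Fintype.card_bool]
  linarith

lemma doubling_isContained_doubling_map (H : SimpleGraph V) (e : V ↪ W) :
    doubling H ⊑ doubling (H.map e) := by
  have hinj : Function.Injective (Prod.map e id : V × Bool → W × Bool) :=
    e.injective.prodMap Function.injective_id
  refine ⟨⟨⟨Prod.map e id, fun {x y} h ↦ ⟨hinj.ne h.1, h.2.imp (congrArg e) fun hadj ↦ ?_⟩⟩, hinj⟩⟩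
  exact map_adj_apply.2 hadj

lemma ncard_Iic_le_two_pow_edgeCount [Finite V] (D : SimpleGraph V) :
    (Set.Iic D).ncard ≤ 2 ^ edgeCount D := by
  rw [edgeCount, ← Set.ncard_powerset]
  exact Set.ncard_le_ncard_of_injOn edgeSet (fun _ hD' ↦ edgeSet_mono hD') edgeSet_injective.injOn

lemma ncard_biUnion_le_mul {ι : Type*} {s : Set ι} (hs : s.Finite) {f : ι → Set V} {k : ℕ}
    (h : ∀ i ∈ s, (f i).ncard ≤ k) : (⋃ i ∈ s, f i).ncard ≤ s.ncard * k := by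
  lift s to Finset ι using hs
  rw [Set.ncard_coe_finset]
  exact (Finset.set_ncard_biUnion_le s f).trans (Finset.sum_le_card_nsmul _ _ _ h)

/-- A subgraph of `D` on at most `n` vertices is determined, up to isomorphism, by its vertex set
and its edge set. -/
lemma exists_family_of_isContained [Fintype W] (D : SimpleGraph W) {n : ℕ} (hn : 0 < n) :
    ∃ F : Set (SimpleGraph (Fin n)), F.ncard ≤ 2 ^ (Fintype.card W + edgeCount D) ∧
      ∀ {V : Type*} [Fintype V] (G : SimpleGraph V), Fintype.card V ≤ n → G ⊑ D →
        ∃ e : V ↪ Fin n, G.map e ∈ F := by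
  have : Nonempty (Fin n) := ⟨⟨0, hn⟩⟩
  have hnumbering : ∀ S : Finset W, ∃ ε : W → Fin n, S.card ≤ n → Set.InjOn ε S := by
    intro S
    by_cases hS : S.card ≤ n
    · obtain ⟨f⟩ : Nonempty (S ↪ Fin n) := Function.Embedding.nonempty_of_card_le (by simpa)
      obtain ⟨ε, hε⟩ := Set.exists_injOn_iff_injective.2 ⟨f, f.injective⟩
      exact ⟨ε, fun _ ↦ hε⟩
    · exact ⟨Classical.arbitrary _, fun h ↦ absurd h hS⟩
  choose ε hε using hnumbering
  refine ⟨(fun p : Finset W × SimpleGraph W ↦ p.2.map (ε p.1)) '' Set.univ ×ˢ Set.Iic D, ?_, ?_⟩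
  · refine le_trans (Set.ncard_image_le) ?_
    rw [Set.ncard_prod, Set.ncard_univ, Nat.card_eq_fintype_card, Fintype.card_finset, pow_add]
    exact Nat.mul_le_mul_left _ (ncard_Iic_le_two_pow_edgeCount D)
  · rintro V _ G hV ⟨φ⟩
    have hcard : (Finset.univ.map φ.toEmbedding).card ≤ n := by simpa
    have hle : G.map φ.toEmbedding ≤ D :=
      (map_le_iff_le_comap _ _ _).2 fun _ _ huv ↦ φ.toHom.map_adj huv
    refine ⟨⟨ε (Finset.univ.map φ.toEmbedding) ∘ φ, fun u v huv ↦ φ.injective ?_⟩,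
      ⟨(_, G.map φ.toEmbedding), ⟨Set.mem_univ _, hle⟩, map_map _ _ _⟩⟩
    exact hε _ hcard (by simp [Copy.toEmbedding]) (by simp [Copy.toEmbedding]) huv

/-- The exponential rate of the number of unlabelled `K_t`-minor-free graphs. -/
def growthExponent (t : ℕ) : ℕ := 2 * compressionConst t * (3 + 4 * 2 ^ t)

universe u

lemma exists_lt_forall_sub_le {K n : ℕ} (hK : 0 < K) (hn : 2 ≤ n) :
    ∃ k < n, n ≤ 2 * K * (n - k) ∧ ∀ v ≤ n, ∀ a, v ≤ K * a + 1 → v - a ≤ k := by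
  obtain ⟨K, rfl⟩ := Nat.exists_eq_add_one_of_ne_zero hK.ne'
  let k := (K * n + 1) / (K + 1)
  have hmul : (K + 1) * k ≤ K * n + 1 := Nat.mul_div_le _ _
  have hk : k < n := lt_of_mul_lt_mul_left (a := K + 1) (by linarith) (Nat.zero_le _)
  refine ⟨k, hk, ?_, fun v hv a hva ↦ (Nat.le_div_iff_mul_le K.succ_pos).2 ?_⟩
  · zify [hk.le] at hmul ⊢
    linarith
  · rcases Nat.le_total v a with h | h
    · simp [Nat.sub_eq_zero_of_le h]
    · have := Nat.mul_le_mul_left K hv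
      zify [h] at hva this ⊢
      linarith

/-- Induction on `n`: the graph is a subgraph of the doubling of a compressed graph. -/
lemma exists_family_of_completeMinorFree (t n : ℕ) : ∃ F : Set (SimpleGraph (Fin n)),
    F.ncard ≤ 2 ^ (growthExponent t * n) ∧
      ∀ {V : Type u} [Fintype V] (G : SimpleGraph V), CompleteMinorFree t G → Fintype.card V ≤ n →
        ∃ e : V ↪ Fin n, G.map e ∈ F := by
  induction n using Nat.strong_induction_on with
  | _ n ih =>
  rcases Nat.lt_or_ge n 2 with hn | hn
  · have : Subsingleton (Fin n) := Fin.subsingleton_iff_le_one.2 (by lia)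
    refine ⟨Set.univ, ?_, fun {V} _ G _ hV ↦ ?_⟩
    · rw [Set.ncard_univ]
      exact Finite.card_le_one_iff_subsingleton.2 inferInstance |>.trans Nat.one_le_two_pow
    · exact (Function.Embedding.nonempty_of_card_le (by simpa)).elim fun e ↦ ⟨e, Set.mem_univ _⟩
  obtain ⟨k, hk, hkn, hcompress⟩ :=
    exists_lt_forall_sub_le (K := compressionConst t) (by simp [compressionConst]) hn
  obtain ⟨F, hFcard, hF⟩ := ih k hk
  choose D hDcard hD using fun H : SimpleGraph (Fin k) ↦
    exists_family_of_isContained.{_, u} (doubling H) (two_pos.trans_le hn)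
  let F' := {H ∈ F | edgeCount H ≤ 2 ^ t * k}
  refine ⟨⋃ H ∈ F', D H, ?_, fun {V} _ G hG hV ↦ ?_⟩
  · have hDF' : ∀ H ∈ F', (D H).ncard ≤ 2 ^ ((3 + 4 * 2 ^ t) * k) := by
      refine fun H hH ↦ (hDcard H).trans (Nat.pow_le_pow_right two_pos ?_)
      simpa using card_add_edgeCount_doubling_le (H := H) (by simpa using hH.2)
    have hexponent : growthExponent t * k + (3 + 4 * 2 ^ t) * k ≤ growthExponent t * n := by
      have := Nat.mul_le_mul_left (3 + 4 * 2 ^ t) (hk.le.trans hkn)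
      rw [growthExponent]
      zify [hk.le] at this ⊢
      linarith
    calc (⋃ H ∈ F', D H).ncard ≤ F'.ncard * 2 ^ ((3 + 4 * 2 ^ t) * k) :=
          ncard_biUnion_le_mul (Set.toFinite F') hDF'
      _ ≤ 2 ^ (growthExponent t * k) * 2 ^ ((3 + 4 * 2 ^ t) * k) :=
          Nat.mul_le_mul_right _ ((Set.ncard_le_ncard (Set.sep_subset _ _)).trans hFcard)
      _ ≤ 2 ^ (growthExponent t * n) := by
          rw [← pow_add]
          exact Nat.pow_le_pow_right two_pos hexponent
  · classical
    obtain ⟨A, G', hG', hcard, hGG'⟩ := hG.exists_compression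
    have hcard' : Fintype.card ((A : Set V)ᶜ : Set V) ≤ k := by
      rw [← Nat.card_eq_fintype_card, Nat.card_coe_set_eq, Set.ncard_compl, Set.ncard_coe_finset,
        Nat.card_eq_fintype_card]
      exact hcompress _ hV _ hcard
    obtain ⟨e, he⟩ := hF G' hG' hcard'
    have hedge : edgeCount (G'.map e) ≤ 2 ^ t * k :=
      edgeCount_map G' e ▸ hG'.edgeCount_le.trans (Nat.mul_le_mul_left _ hcard')
    obtain ⟨e', he'⟩ := hD _ G hV (hGG'.trans (doubling_isContained_doubling_map G' e))
    exact ⟨e', Set.mem_biUnion ⟨he, hedge⟩ he'⟩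

lemma ncard_completeMinorFree_le (t n : ℕ) :
    {G : SimpleGraph (Fin n) | CompleteMinorFree t G}.ncard ≤
      n.factorial * 2 ^ (growthExponent t * n) := by
  obtain ⟨F, hFcard, hF⟩ := exists_family_of_completeMinorFree t n
  have hsub : {G : SimpleGraph (Fin n) | CompleteMinorFree t G} ⊆
      (fun p : (Fin n ↪ Fin n) × SimpleGraph (Fin n) ↦ p.2.comap p.1) '' Set.univ ×ˢ F := by
    intro G hG
    obtain ⟨e, he⟩ := hF G hG (Fintype.card_fin n).le
    exact ⟨(e, G.map e), ⟨Set.mem_univ _, he⟩, comap_map_eq e G⟩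
  refine (Set.ncard_le_ncard hsub).trans (le_trans (Set.ncard_image_le) ?_)
  rw [Set.ncard_prod, Set.ncard_univ, Nat.card_eq_fintype_card, Fintype.card_embedding_eq,
    Fintype.card_fin, Nat.descFactorial_self]
  exact Nat.mul_le_mul_left _ hFcard

end UpperBound

/-! ### Planar stacking -/

section Stacking

variable {V W α β : Type*}

lemma ConnectedOn.preimage_val {G : SimpleGraph V} {S T : Set V} (hT : ConnectedOn G T)
    (hTS : T ⊆ S) : ConnectedOn (G.induce S) (Subtype.val ⁻¹' T) := by
  obtain ⟨⟨x, hx⟩, hcut⟩ := hT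
  refine ⟨⟨⟨x, hTS hx⟩, hx⟩, ?_⟩
  rintro A hA ⟨a, ha⟩ ⟨b, hb, hbA⟩
  obtain ⟨_, ⟨u, hu, rfl⟩, v, ⟨hv, hvA⟩, huv⟩ := hcut (Subtype.val '' A)
    (Set.image_subset_iff.2 hA) ⟨a, a, ha, rfl⟩ ⟨b, hb, by simpa using hbA⟩
  exact ⟨u, hu, ⟨v, hTS hv⟩, ⟨hv, fun h ↦ hvA ⟨_, h, rfl⟩⟩, huv⟩

lemma isMinor_induce_iff {K : SimpleGraph α} {G : SimpleGraph V} {S : Set V} :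
    IsMinor K (G.induce S) ↔ ∃ f, IsMinorModel K G S f := by
  rw [isMinor_iff_exists_isMinorModel]
  constructor
  · rintro ⟨f, hf⟩
    exact ⟨_, hf.biUnion (isMinorModel_singleton (Copy.induce G S) Subtype.prop)⟩
  · rintro ⟨f, hsub, hconn, hdisj, hadj⟩
    refine ⟨fun a ↦ Subtype.val ⁻¹' f a, fun _ ↦ Set.subset_univ _,
      fun a ↦ (hconn a).preimage_val (hsub a), fun a b hab ↦ (hdisj hab).preimage _,
      fun a b hab ↦ ?_⟩
    obtain ⟨u, hu, v, hv, huv⟩ := hadj a b hab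
    exact ⟨⟨u, hsub a hu⟩, hu, ⟨v, hsub b hv⟩, hv, huv⟩

lemma IsMinorModel.comp_copy {K : SimpleGraph α} {H : SimpleGraph β} {G : SimpleGraph V} {S : Set V}
    {f : α → Set V} (hf : IsMinorModel K G S f) (φ : Copy H K) :
    IsMinorModel H G S fun b ↦ f (φ b) where
  subset _ := hf.subset _
  connectedOn _ := hf.connectedOn _
  disjoint _ _ hab := hf.disjoint (φ.injective.ne hab)
  adj _ _ hab := hf.adj _ _ (φ.toHom.map_adj hab)

lemma ConnectedOn.exists_adj {G : SimpleGraph V} {T : Set V} {v : V} (hT : ConnectedOn G T)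
    (hv : v ∈ T) (hne : (T \ {v}).Nonempty) : ∃ x ∈ T \ {v}, G.Adj v x := by
  obtain ⟨u, rfl, x, hx, hux⟩ := hT.2 {v} (Set.singleton_subset_iff.2 hv) ⟨v, rfl⟩ hne
  exact ⟨x, hx, hux⟩

lemma ConnectedOn.diff_singleton {G : SimpleGraph V} {S : Set V} {v : V} (hS : ConnectedOn G S)
    (hne : (S \ {v}).Nonempty) (hclique : G.IsClique (G.neighborSet v ∩ S)) :
    ConnectedOn G (S \ {v}) := by
  refine ⟨hne, fun A hA hAne hBne ↦ ?_⟩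
  have hcut : ∀ B ⊆ S \ {v}, B.Nonempty → ((S \ {v}) \ B).Nonempty →
      (∃ u ∈ B, ∃ w ∈ (S \ {v}) \ B, G.Adj u w) ∨ ∃ u ∈ B, G.Adj v u := by
    rintro B hB hBne ⟨b, hb, hbB⟩
    obtain ⟨u, hu, w, ⟨hwS, hwB⟩, huw⟩ :=
      hS.2 B (hB.trans Set.sdiff_subset) hBne ⟨b, hb.1, hbB⟩
    by_cases hwv : w = v
    · exact Or.inr ⟨u, hu, hwv ▸ huw.symm⟩
    · exact Or.inl ⟨u, hu, w, ⟨⟨hwS, hwv⟩, hwB⟩, huw⟩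
  have hcompl : (S \ {v}) \ ((S \ {v}) \ A) = A := Set.sdiff_sdiff_cancel_left hA
  rcases hcut A hA hAne hBne with h | ⟨u, hu, hvu⟩
  · exact h
  rcases hcut _ Set.sdiff_subset hBne (hcompl.symm ▸ hAne) with ⟨w, hw, u', hu', huw⟩ | ⟨w, hw, hvw⟩
  · exact ⟨u', hcompl ▸ hu', w, hw, huw.symm⟩
  · exact ⟨u, hu, w, hw, hclique ⟨hvu, (hA hu).1⟩ ⟨hvw, hw.1.1⟩ (ne_of_mem_of_not_mem hu hw.2)⟩

lemma IsMinorModel.diff_singleton {K : SimpleGraph α} {G : SimpleGraph V} {S : Set V} {v : V}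
    {f : α → Set V} (hf : IsMinorModel K G (insert v S) f)
    (hclique : G.IsClique (G.neighborSet v ∩ S)) (hne : ∀ a, f a ≠ {v}) :
    IsMinorModel K G S fun a ↦ f a \ {v} := by
  have hmem : ∀ {a x}, x ∈ f a → x ≠ v → x ∈ S := fun hx hxv ↦
    (hf.subset _ hx).resolve_left hxv
  have hnonempty : ∀ a, (f a \ {v}).Nonempty := fun a ↦ by
    refine Set.sdiff_nonempty.2 fun h ↦ hne a ?_
    exact (hf.connectedOn a).1.subset_singleton_iff.1 h
  have hadj_of_mem : ∀ {a b u w}, a ≠ b → u ∈ f a → w ∈ f b → w ≠ v → G.Adj u w →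
      ∃ x ∈ f a \ {v}, G.Adj x w := by
    intro a b u w hab hu hw hwv huw
    by_cases huv : u = v
    · subst huv
      obtain ⟨x, hx, hux⟩ := (hf.connectedOn a).exists_adj hu (hnonempty a)
      have hxN : x ∈ G.neighborSet u ∩ S := ⟨hux, hmem hx.1 hx.2⟩
      have hwN : w ∈ G.neighborSet u ∩ S := ⟨huw, hmem hw hwv⟩
      exact ⟨x, hx, hclique hxN hwN ((hf.disjoint hab).ne_of_mem hx.1 hw)⟩
    · exact ⟨u, ⟨hu, huv⟩, huw⟩
  refine ⟨fun a x hx ↦ hmem hx.1 hx.2, fun a ↦ (hf.connectedOn a).diff_singleton (hnonempty a) ?_,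
    fun a b hab ↦ (hf.disjoint hab).mono Set.sdiff_subset Set.sdiff_subset, fun a b hab ↦ ?_⟩
  · refine hclique.subset fun x hx ↦ ?_
    exact ⟨hx.1, hmem hx.2 hx.1.ne'⟩
  · obtain ⟨u, hu, w, hw, huw⟩ := hf.adj a b hab
    by_cases hwv : w = v
    · obtain ⟨x, hx, hxu⟩ := hadj_of_mem hab.ne' hw hu (hwv ▸ huw.ne) huw.symm
      exact ⟨u, ⟨hu, hwv ▸ huw.ne⟩, x, hx, hxu.symm⟩
    · obtain ⟨x, hx, hxw⟩ := hadj_of_mem hab.ne hu hw hwv huw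
      exact ⟨x, hx, w, ⟨hw, hwv⟩, hxw⟩

lemma IsMinorModel.inter_nonempty_of_eq_singleton {K : SimpleGraph α} {G : SimpleGraph V}
    {S N : Set V} {v : V} {f : α → Set V} (hf : IsMinorModel K G (insert v S) f)
    (hN : G.neighborSet v ∩ S ⊆ N) {a b : α} (ha : f a = {v}) (hab : K.Adj a b) :
    (f b ∩ N).Nonempty := by
  obtain ⟨u, hu, w, hw, huw⟩ := hf.adj a b hab
  rw [ha, Set.mem_singleton_iff] at hu
  subst hu
  exact ⟨w, hw, hN ⟨huw, (hf.subset b hw).resolve_left huw.ne'⟩⟩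

lemma ncard_le_card_of_pairwiseDisjoint {ι : Type*} {s : Set ι} {f : ι → Set V} {N : Finset V}
    (hdisj : s.PairwiseDisjoint f) (h : ∀ i ∈ s, (f i ∩ N).Nonempty) : s.ncard ≤ N.card := by
  obtain rfl | ⟨i, hi⟩ := s.eq_empty_or_nonempty
  · simp
  have : Nonempty V := ⟨(h i hi).some⟩
  choose! g hg using h
  rw [← Set.ncard_coe_finset]
  exact Set.ncard_le_ncard_of_injOn g (fun i hi ↦ (hg i hi).2) fun i hi j hj hij ↦
    hdisj.elim_set hi hj _ (hg i hi).1 (hij ▸ (hg j hj).1)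

/-- `S` contains no model of `K₂,₃` whose three vertices of degree two have branch sets meeting `N`.
For a triangle `N` this is a combinatorial substitute for `N` bounding a face: a new vertex can be
joined to all of `N` without creating a `K₃,₃` minor. -/
def IsFaceLike (G : SimpleGraph V) (S N : Set V) : Prop :=
  ∀ f, IsMinorModel (completeBipartiteGraph (Fin 2) (Fin 3)) G S f →
    ¬ ∀ j, (f (Sum.inr j) ∩ N).Nonempty

lemma isFaceLike_of_card_le_two (G : SimpleGraph V) (S : Set V) {N : Finset V} (hN : N.card ≤ 2) :
    IsFaceLike G S N := by
  intro f hf hroot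
  have := ncard_le_card_of_pairwiseDisjoint (s := Set.univ)
    ((hf.disjoint.comp_of_injective Sum.inr_injective).set_pairwise _) fun j _ ↦ hroot j
  rw [Set.ncard_univ, Nat.card_fin] at this
  lia

lemma isFaceLike_of_card_lt_five (G : SimpleGraph V) {S : Finset V} (N : Set V)
    (hS : S.card < 5) : IsFaceLike G S N := by
  intro f hf _
  have := ncard_le_card_of_pairwiseDisjoint (N := S) (hf.disjoint.set_pairwise Set.univ)
    fun a _ ↦ (Set.inter_eq_left.2 (hf.subset a)).symm ▸ (hf.connectedOn a).1
  simp only [Set.ncard_univ, Nat.card_eq_fintype_card, Fintype.card_sum, Fintype.card_fin] at this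
  lia

lemma exists_copy_completeBipartiteGraph (a : Fin 3 ⊕ Fin 3) :
    ∃ φ : Copy (completeBipartiteGraph (Fin 2) (Fin 3)) (completeBipartiteGraph (Fin 3) (Fin 3)),
      (∀ b, a ≠ φ b) ∧
        ∀ j, (completeBipartiteGraph (Fin 3) (Fin 3)).Adj a (φ (Sum.inr j)) := by
  rcases a with i | i
  · refine ⟨⟨⟨Sum.map i.succAbove id, ?_⟩, ?_⟩, ?_, ?_⟩
    · rintro (_ | _) (_ | _) <;> simp
    · exact Sum.map_injective.2 ⟨Fin.succAbove_right_injective, Function.injective_id⟩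
    · rintro (_ | _) <;> simp
    · simp
  · refine ⟨⟨⟨Sum.swap ∘ Sum.map i.succAbove id, ?_⟩, ?_⟩, ?_, ?_⟩
    · rintro (_ | _) (_ | _) <;> simp
    · exact Sum.swap_leftInverse.injective.comp
        (Sum.map_injective.2 ⟨Fin.succAbove_right_injective, Function.injective_id⟩)
    · rintro (_ | _) <;> simp
    · simp

lemma IsPlanar.induce_insert {G : SimpleGraph V} {S : Set V} {v : V} {N : Finset V}
    (hS : IsPlanar (G.induce S)) (hN : G.neighborSet v ∩ S ⊆ N) (hclique : G.IsClique (N : Set V))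
    (hcard : N.card ≤ 3) (hface : IsFaceLike G S N) : IsPlanar (G.induce (insert v S)) := by
  have hclique' := hclique.subset hN
  constructor <;> rw [isMinor_induce_iff] <;> rintro ⟨f, hf⟩
  · refine hS.1 (isMinor_induce_iff.2 ⟨_, hf.diff_singleton hclique' fun a ha ↦ ?_⟩)
    have := ncard_le_card_of_pairwiseDisjoint (hf.disjoint.set_pairwise {a}ᶜ) fun b hb ↦
      hf.inter_nonempty_of_eq_singleton hN ha (top_adj a b |>.2 (Ne.symm hb))
    rw [Set.ncard_compl, Set.ncard_singleton, Nat.card_fin] at this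
    lia
  · refine hS.2 (isMinor_induce_iff.2 ⟨_, hf.diff_singleton hclique' fun a ha ↦ ?_⟩)
    obtain ⟨φ, hφ, hφ_adj⟩ := exists_copy_completeBipartiteGraph a
    refine hface _ { hf.comp_copy φ with subset := fun b x hx ↦ ?_ } fun j ↦
      hf.inter_nonempty_of_eq_singleton hN ha (hφ_adj j)
    refine (hf.subset _ hx).resolve_left fun hxv ↦ ?_
    exact Set.disjoint_left.1 (hf.disjoint (hφ b)) (ha ▸ hxv) hx

/-- After stacking `r` onto the face-like triangle `N`, the new triangles through `r` are
face-like. -/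
lemma IsFaceLike.insert [DecidableEq V] {G : SimpleGraph V} {S : Set V} {r d : V} {N : Finset V}
    (hface : IsFaceLike G S N) (hN : G.neighborSet r ∩ S ⊆ N) (hclique : G.IsClique (N : Set V))
    (hcard : N.card ≤ 3) (hd : d ∈ N) :
    IsFaceLike G (insert r S) (insert r (N.erase d) : Finset V) := by
  intro f hf hroot
  have hmeet : ∀ j, r ∉ f (Sum.inr j) → (f (Sum.inr j) ∩ (N.erase d : Finset V)).Nonempty := by
    intro j hj
    obtain ⟨u, hu, huN⟩ := hroot j
    rw [Finset.coe_insert, Set.mem_insert_iff] at huN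
    exact ⟨u, hu, huN.resolve_left fun h ↦ hj (h ▸ hu)⟩
  obtain ⟨i, hi⟩ : ∃ i, r ∈ f (Sum.inr i) := by
    by_contra! h
    have := ncard_le_card_of_pairwiseDisjoint (s := Set.univ)
      ((hf.disjoint.comp_of_injective Sum.inr_injective).set_pairwise _) fun j _ ↦ hmeet j (h j)
    rw [Set.ncard_univ, Nat.card_fin, Finset.card_erase_of_mem hd] at this
    lia
  have hother : ∀ b, b ≠ Sum.inr i → r ∉ f b := fun b hb hrb ↦
    Set.disjoint_left.1 (hf.disjoint hb) hrb hi
  have hmeet' : ∀ j, j ≠ i → (f (Sum.inr j) ∩ N).Nonempty := fun j hj ↦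
    (hmeet j (hother _ (Sum.inr_injective.ne hj))).mono
      (Set.inter_subset_inter_right _ (Finset.coe_subset.2 (N.erase_subset d)))
  have hne : f (Sum.inr i) ≠ {r} := by
    intro hsingle
    have := ncard_le_card_of_pairwiseDisjoint (N := N) (hf.disjoint.set_pairwise {Sum.inr i}ᶜ) <| by
      rintro (b | j) hb
      · exact hf.inter_nonempty_of_eq_singleton hN hsingle (by simp)
      · exact hmeet' j fun h ↦ hb (congrArg Sum.inr h)
    rw [Set.ncard_compl, Set.ncard_singleton, Nat.card_eq_fintype_card, Fintype.card_sum,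
      Fintype.card_fin, Fintype.card_fin] at this
    lia
  have hf' := hf.diff_singleton (hclique.subset hN) fun b hb ↦ by
    by_cases hbi : b = Sum.inr i
    · exact hne (hbi ▸ hb)
    · exact hother b hbi (hb ▸ rfl)
  refine hface _ hf' fun j ↦ ?_
  by_cases hj : j = i
  · obtain ⟨x, hx, hrx⟩ := (hf.connectedOn _).exists_adj hi (hf'.connectedOn (Sum.inr i)).1
    exact hj ▸ ⟨x, hx, hN ⟨hrx, hf'.subset _ hx⟩⟩
  · obtain ⟨u, hu, huN⟩ := hmeet' j hj
    exact ⟨u, ⟨hu, fun h ↦ hother _ (Sum.inr_injective.ne hj) (h ▸ hu)⟩, huN⟩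

end Stacking

/-! ### Layered labelled graphs -/

section Layerings

variable {V : Type*} {width : ℕ → ℕ} {G : SimpleGraph V} {ℓ ℓ' : V → ℕ}

/-- Every vertex at a positive level `t` has `width t` neighbours below level `t`, one of them
at level `t - 1`. -/
structure IsLayering (width : ℕ → ℕ) (G : SimpleGraph V) (ℓ : V → ℕ) : Prop where
  ncard_lower : ∀ v, 0 < ℓ v → {w | ℓ w < ℓ v ∧ G.Adj w v}.ncard = width (ℓ v)
  exists_adj : ∀ v, 0 < ℓ v → ∃ w, G.Adj w v ∧ ℓ w + 1 = ℓ v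

/-- If `v` were higher in `ℓ'`, it would have too many lower neighbours there. -/
lemma IsLayering.apply_le [Finite V] (h : IsLayering width G ℓ) (h' : IsLayering width G ℓ')
    (hwidth : Antitone width) {v : V} (hv : 0 < ℓ v) (hlow : ∀ w, ℓ w < ℓ v ↔ ℓ' w < ℓ v) :
    ℓ' v ≤ ℓ v := by
  by_contra! hlt
  obtain ⟨x, hxv, hx⟩ := h'.exists_adj v (hv.trans hlt)
  have hssub : {w | ℓ w < ℓ v ∧ G.Adj w v} ⊂ {w | ℓ' w < ℓ' v ∧ G.Adj w v} := by
    refine ⟨fun w hw ↦ ⟨((hlow w).1 hw.1).trans hlt, hw.2⟩, fun hsub ↦ ?_⟩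
    have := (hlow x).1 (hsub ⟨by lia, hxv⟩ : x ∈ {w | ℓ w < ℓ v ∧ G.Adj w v}).1
    lia
  have := Set.ncard_lt_ncard hssub
  rw [h.ncard_lower v hv, h'.ncard_lower v (hv.trans hlt)] at this
  exact this.not_ge (hwidth hlt.le)

lemma IsLayering.eq_of_zero_iff [Finite V] (h : IsLayering width G ℓ) (h' : IsLayering width G ℓ')
    (hwidth : Antitone width) (hzero : ∀ v, ℓ v = 0 ↔ ℓ' v = 0) : ℓ = ℓ' := by
  have key : ∀ t v, ℓ v = t ↔ ℓ' v = t := by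
    intro t
    induction t using Nat.strong_induction_on with | _ t ih
    intro v
    obtain rfl | ht := t.eq_zero_or_pos
    · exact hzero v
    have hlow : ∀ w, ℓ w < t ↔ ℓ' w < t := fun w ↦
      ⟨fun hw ↦ ((ih _ hw w).1 rfl).symm ▸ hw, fun hw ↦ ((ih _ hw w).2 rfl).symm ▸ hw⟩
    have := (hlow v).not
    constructor <;> rintro rfl
    · have := h.apply_le h' hwidth ht hlow
      lia
    · have := h'.apply_le h hwidth ht fun w ↦ (hlow w).symm
      lia
  exact funext fun v ↦ ((key _ v).1 rfl).symm

end Layerings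

section BackGraph

variable {b b' : ℕ → Finset ℕ} {n : ℕ}

/-- The graph on `ℕ` in which the smaller neighbours of `i` are the elements `x < i` of `b i`. -/
def backGraph (b : ℕ → Finset ℕ) : SimpleGraph ℕ := fromRel fun x i ↦ x < i ∧ x ∈ b i

lemma backGraph_adj_of_lt {x i : ℕ} (h : x < i) : (backGraph b).Adj x i ↔ x ∈ b i := by
  simp [backGraph, h, h.ne, h.not_gt]

lemma backGraph_adj_of_mem (hb : ∀ i, b i ⊆ Finset.range i) {x i : ℕ} (h : x ∈ b i) :
    (backGraph b).Adj x i :=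
  (backGraph_adj_of_lt (Finset.mem_range.1 (hb i h))).2 h

lemma isPlanar_induce_backGraph (hclique : ∀ i, (backGraph b).IsClique (b i : Set ℕ))
    (hcard : ∀ i, (b i).card ≤ 3) (hface : ∀ i, IsFaceLike (backGraph b) (Set.Iio i) (b i))
    (n : ℕ) :
    IsPlanar ((backGraph b).induce (Set.Iio n)) := by
  induction n with
  | zero =>
    constructor <;> rw [isMinor_induce_iff] <;> rintro ⟨f, hf⟩
    · exact Nat.not_lt_zero _ (hf.subset 0 (hf.connectedOn 0).1.some_mem)
    · exact Nat.not_lt_zero _ (hf.subset (.inl 0) (hf.connectedOn (.inl 0)).1.some_mem)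
  | succ n ih =>
    rw [← Order.succ_eq_add_one, Order.Iio_succ_eq_insert]
    exact ih.induce_insert (fun x hx ↦ (backGraph_adj_of_lt hx.2).1 hx.1.symm) (hclique n)
      (hcard n) (hface n)

/-- The copy of `backGraph b` on `Fin n` in which `v` plays the part of `σ v`. -/
def labelledGraph (b : ℕ → Finset ℕ) (σ : Equiv.Perm (Fin n)) : SimpleGraph (Fin n) :=
  (backGraph b).comap fun v ↦ (σ v : ℕ)

/-- The part played by each vertex in `labelledGraph b σ`, as an embedding into `ℕ`. -/
def labelEmbedding (σ : Equiv.Perm (Fin n)) : Fin n ↪ ℕ :=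
  σ.toEmbedding.trans Fin.valEmbedding

lemma isPlanar_labelledGraph (h : IsPlanar ((backGraph b).induce (Set.Iio n)))
    (σ : Equiv.Perm (Fin n)) : IsPlanar (labelledGraph b σ) := by
  refine h.of_isContained ⟨⟨⟨fun v ↦ ⟨σ v, (σ v).2⟩, fun hvw ↦ hvw⟩, fun v w hvw ↦ ?_⟩⟩
  exact (labelEmbedding σ).injective (congrArg Subtype.val hvw)

lemma edgeCount_labelledGraph (hb : ∀ i, b i ⊆ Finset.range i) (σ : Equiv.Perm (Fin n)) :
    edgeCount (labelledGraph b σ) = ∑ i ∈ Finset.range n, (b i).card := by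
  have hinj : Set.InjOn (fun x : (_ : ℕ) × ℕ ↦ s(x.2, x.1)) ((Finset.range n).sigma b) := by
    rintro ⟨i, x⟩ hx ⟨j, y⟩ hy hxy
    have hxi := Finset.mem_range.1 (hb i (Finset.mem_sigma.1 hx).2)
    have hyj := Finset.mem_range.1 (hb j (Finset.mem_sigma.1 hy).2)
    rcases Sym2.eq_iff.1 hxy with ⟨rfl, rfl⟩ | ⟨rfl, rfl⟩
    · rfl
    · exact absurd hxi hyj.not_gt
  rw [← edgeCount_map _ (labelEmbedding σ), edgeCount, ← Finset.card_sigma, ← Set.ncard_coe_finset,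
    ← hinj.ncard_image]
  congr 1
  ext e
  constructor
  · induction e with | h x y
    rintro ⟨-, v, w, hvw, rfl, rfl⟩
    rcases lt_or_gt_of_ne ((labelEmbedding σ).injective.ne (hvw.ne)) with hlt | hlt
    · exact ⟨⟨σ w, σ v⟩, Finset.mem_sigma.2
        ⟨Finset.mem_range.2 (σ w).2, (backGraph_adj_of_lt hlt).1 hvw⟩, rfl⟩
    · exact ⟨⟨σ v, σ w⟩, Finset.mem_sigma.2
        ⟨Finset.mem_range.2 (σ v).2, (backGraph_adj_of_lt hlt).1 hvw.symm⟩, Sym2.eq_swap⟩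
  · rintro ⟨⟨i, x⟩, hx, rfl⟩
    obtain ⟨hi, hx⟩ := Finset.mem_sigma.1 hx
    have hxi := Finset.mem_range.1 (hb i hx)
    have hin := Finset.mem_range.1 hi
    refine ⟨hxi.ne, σ.symm ⟨x, hxi.trans hin⟩, σ.symm ⟨i, hin⟩, ?_, by simp [labelEmbedding],
      by simp [labelEmbedding]⟩
    simpa [labelledGraph] using backGraph_adj_of_mem hb hx

lemma eq_of_labelledGraph_eq (hb : ∀ i, b i ⊆ Finset.range i) (hb' : ∀ i, b' i ⊆ Finset.range i)
    {σ : Equiv.Perm (Fin n)} (h : labelledGraph b σ = labelledGraph b' σ) {i : ℕ} (hi : i < n) :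
    b i = b' i := by
  have hiff : ∀ x < i, (x ∈ b i ↔ x ∈ b' i) := by
    intro x hx
    rw [← backGraph_adj_of_lt hx, ← backGraph_adj_of_lt hx]
    simpa [labelledGraph] using
      congrArg (fun G ↦ G.Adj (σ.symm ⟨x, hx.trans hi⟩) (σ.symm ⟨i, hi⟩)) h
  exact Finset.ext fun x ↦ ⟨fun hx ↦ (hiff x (Finset.mem_range.1 (hb i hx))).1 hx,
    fun hx ↦ (hiff x (Finset.mem_range.1 (hb' i hx))).2 hx⟩

lemma isLayering_labelledGraph {level width : ℕ → ℕ} (hlevel : Monotone level)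
    (hlt : ∀ i, 0 < level i → ∀ x ∈ b i, level x < level i)
    (hpred : ∀ i, 0 < level i → ∃ x ∈ b i, level x + 1 = level i)
    (hcard : ∀ i, 0 < level i → (b i).card = width (level i)) (σ : Equiv.Perm (Fin n)) :
    IsLayering width (labelledGraph b σ) fun v ↦ level (σ v) := by
  have hmem : ∀ {x i}, level x < level i → ((backGraph b).Adj x i ↔ x ∈ b i) := fun h ↦
    backGraph_adj_of_lt (hlevel.reflect_lt h)
  have hlift : ∀ v : Fin n, 0 < level (σ v) → ∀ x ∈ b (σ v), ∃ w : Fin n, (σ w : ℕ) = x := by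
    intro v hv x hx
    exact ⟨σ.symm ⟨x, (hlevel.reflect_lt (hlt _ hv x hx)).trans (σ v).2⟩, by simp⟩
  refine ⟨fun v hv ↦ ?_, fun v hv ↦ ?_⟩
  · rw [← hcard _ hv, ← Set.ncard_coe_finset,
      ← Set.ncard_image_of_injective _ (labelEmbedding σ).injective]
    congr 1
    ext x
    constructor
    · rintro ⟨w, ⟨hw, hadj⟩, rfl⟩
      exact (hmem hw).1 hadj
    · intro hx
      obtain ⟨w, rfl⟩ := hlift v hv x hx
      exact ⟨w, ⟨hlt _ hv _ hx, (hmem (hlt _ hv _ hx)).2 hx⟩, rfl⟩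
  · obtain ⟨x, hx, hxl⟩ := hpred _ hv
    obtain ⟨w, rfl⟩ := hlift v hv x hx
    exact ⟨w, (hmem (by lia)).2 hx, hxl⟩

lemma apply_eq_of_symm_comp_castLE_eq {z : ℕ} {hz : z ≤ n} {σ τ : Equiv.Perm (Fin n)}
    (h : σ.symm ∘ Fin.castLE hz = τ.symm ∘ Fin.castLE hz) {v : Fin n} (hv : (σ v : ℕ) < z) :
    σ v = τ v := by
  have := congrFun h ⟨σ v, hv⟩
  simp only [Function.comp_apply, Fin.castLE_mk, Fin.eta, Equiv.symm_apply_apply] at this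
  rw [this, Equiv.apply_symm_apply, ← this]

lemma IsLayering.level_eq {G : SimpleGraph (Fin n)} {level width : ℕ → ℕ} {z : ℕ} {hz : z ≤ n}
    {σ τ : Equiv.Perm (Fin n)} (h : IsLayering width G fun v ↦ level (σ v))
    (h' : IsLayering width G fun v ↦ level (τ v)) (hwidth : Antitone width)
    (hzero : ∀ i, level i = 0 ↔ i < z)
    (hbase : σ.symm ∘ Fin.castLE hz = τ.symm ∘ Fin.castLE hz) (v : Fin n) :
    level (σ v) = level (τ v) :=
  congrFun (h.eq_of_zero_iff h' hwidth fun _ ↦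
    ⟨fun hv ↦ apply_eq_of_symm_comp_castLE_eq hbase ((hzero _).1 hv) ▸ hv,
      fun hv ↦ apply_eq_of_symm_comp_castLE_eq hbase.symm ((hzero _).1 hv) ▸ hv⟩) v

lemma factorial_mul_card_le {ι : Type*} [Fintype ι] {B : ι → ℕ → Finset ℕ} {level width : ℕ → ℕ}
    {z : ℕ} {P : Set (SimpleGraph (Fin n))} (hwidth : Antitone width) (hz : z ≤ n)
    (hzero : ∀ i, level i = 0 ↔ i < z) (hB : ∀ x i, B x i ⊆ Finset.range i)
    (hinj : ∀ x y, (∀ i < n, B x i = B y i) → x = y)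
    (hlayer : ∀ x (σ : Equiv.Perm (Fin n)),
      IsLayering width (labelledGraph (B x) σ) fun v ↦ level (σ v))
    (hP : ∀ x (σ : Equiv.Perm (Fin n)), labelledGraph (B x) σ ∈ P) :
    n.factorial * Fintype.card ι ≤
      P.ncard * n ^ z * {g : Equiv.Perm (Fin n) | ∀ v, level (g v) = level v}.ncard := by
  let Φ : Equiv.Perm (Fin n) × ι → SimpleGraph (Fin n) × (Fin z → Fin n) := fun x ↦
    (labelledGraph (B x.2) x.1, x.1.symm ∘ Fin.castLE hz)
  -- The levels, and so the labelling up to a level-preserving permutation, can be read off `Φ x`.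
  have hlevel : ∀ {x y}, Φ x = Φ y → ∀ v, level (x.1 v) = level (y.1 v) := by
    intro x y hxy
    have hgraph : labelledGraph (B x.2) x.1 = labelledGraph (B y.2) y.1 := congrArg Prod.fst hxy
    exact (hlayer x.2 x.1).level_eq (hgraph ▸ hlayer y.2 y.1) hwidth hzero (congrArg Prod.snd hxy)
  have hfibre : ∀ y, (Φ ⁻¹' {y}).ncard ≤
      {g : Equiv.Perm (Fin n) | ∀ v, level (g v) = level v}.ncard := by
    intro y
    obtain hempty | ⟨x₀, hx₀⟩ := (Φ ⁻¹' {y}).eq_empty_or_nonempty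
    · simp [hempty]
    refine Set.ncard_le_ncard_of_injOn (fun x ↦ x.1 * x₀.1⁻¹) (fun x hx v ↦ ?_)
      fun x hx x' hx' hxx' ↦ ?_
    · simpa using hlevel (hx.trans (Eq.symm hx₀)) (x₀.1⁻¹ v)
    · have hσ : x.1 = x'.1 := mul_right_cancel hxx'
      have hgraph : labelledGraph (B x.2) x.1 = labelledGraph (B x'.2) x'.1 :=
        congrArg Prod.fst (hx.trans (Eq.symm hx'))
      rw [← hσ] at hgraph
      exact Prod.ext hσ (hinj _ _ fun i hi ↦ eq_of_labelledGraph_eq (hB _) (hB _) hgraph hi)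
  calc n.factorial * Fintype.card ι
      = (⋃ y ∈ P ×ˢ Set.univ, Φ ⁻¹' {y}).ncard := by
        rw [Set.biUnion_preimage_singleton, Set.preimage_eq_univ_iff.2, Set.ncard_univ,
          Nat.card_prod, Nat.card_perm, Nat.card_fin, Nat.card_eq_fintype_card]
        rintro _ ⟨x, rfl⟩
        exact ⟨hP _ _, Set.mem_univ _⟩
    _ ≤ (P ×ˢ (Set.univ : Set (Fin z → Fin n))).ncard * _ :=
        ncard_biUnion_le_mul (Set.toFinite _) fun y _ ↦ hfibre y
    _ = _ := by
        rw [Set.ncard_prod, Set.ncard_univ, Nat.card_fun, Nat.card_fin, Nat.card_fin]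

end BackGraph

/-! ### Stacked triangulations with a layered forest -/

section StackedForest

variable {D s n : ℕ} {c c' : ℕ → Fin 3} {p p' : ℕ → Fin s}

/-- The current triangle of the stacking process after `k` stacked vertices. Vertex `k + 3` is
stacked on triangle `k` and replaces its `c k`-th corner to form triangle `k + 1`. -/
def triangle (c : ℕ → Fin 3) : ℕ → Fin 3 → ℕ
  | 0 => fun x ↦ x
  | k + 1 => Function.update (triangle c k) (c k) (k + 3)

lemma triangle_lt (c : ℕ → Fin 3) (k : ℕ) (x : Fin 3) : triangle c k x < k + 3 := by
  induction k with
  | zero => exact x.2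
  | succ k ih =>
    rw [triangle, Function.update_apply]
    split_ifs <;> lia

lemma triangle_injective (c : ℕ → Fin 3) (k : ℕ) : Function.Injective (triangle c k) := by
  induction k with
  | zero => exact Fin.val_injective
  | succ k ih =>
    intro x y hxy
    have hx := triangle_lt c k x
    have hy := triangle_lt c k y
    simp only [triangle, Function.update_apply] at hxy
    split_ifs at hxy with hxc hyc hyc
    · exact hxc.trans hyc.symm
    · lia
    · lia
    · exact ih hxy

/-- The vertex set of `triangle c k`. -/
def triangleSet (c : ℕ → Fin 3) (k : ℕ) : Finset ℕ := Finset.univ.image (triangle c k)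

lemma triangle_mem_triangleSet (c : ℕ → Fin 3) (k : ℕ) (x : Fin 3) :
    triangle c k x ∈ triangleSet c k :=
  Finset.mem_image_of_mem _ (Finset.mem_univ x)

lemma triangleSet_subset_range (c : ℕ → Fin 3) (k : ℕ) :
    triangleSet c k ⊆ Finset.range (k + 3) := by
  simp [triangleSet, Finset.subset_iff, triangle_lt]

lemma card_triangleSet (c : ℕ → Fin 3) (k : ℕ) : (triangleSet c k).card = 3 :=
  Finset.card_image_of_injective _ (triangle_injective c k)

lemma triangleSet_succ (c : ℕ → Fin 3) (k : ℕ) :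
    triangleSet c (k + 1) = insert (k + 3) ((triangleSet c k).erase (triangle c k (c k))) := by
  have huniv : (Finset.univ : Finset (Fin 3)) = insert (c k) (Finset.univ.erase (c k)) :=
    (Finset.insert_erase (Finset.mem_univ _)).symm
  rw [triangleSet, huniv, Finset.image_insert, triangle, Function.update_self, triangleSet,
    ← Finset.image_erase (triangle_injective c k)]
  congr 1
  exact Finset.image_congr fun x hx ↦ Function.update_of_ne (Finset.ne_of_mem_erase hx) _ _

lemma add_two_mem_triangleSet (c : ℕ → Fin 3) (k : ℕ) : k + 2 ∈ triangleSet c k := by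
  cases k with
  | zero => exact triangle_mem_triangleSet c 0 2
  | succ k => exact triangleSet_succ c k ▸ Finset.mem_insert_self _ _

lemma apply_eq_of_triangleSet_succ_eq {k : ℕ} (hk : triangle c k = triangle c' k)
    (hsucc : triangleSet c (k + 1) = triangleSet c' (k + 1)) : c k = c' k := by
  by_contra hne
  have hmem : triangle c k (c k) ∈ triangleSet c' (k + 1) := by
    have := triangle_mem_triangleSet c' (k + 1) (c k)
    rwa [triangle, Function.update_of_ne hne, ← hk] at this
  rw [← hsucc, triangleSet_succ, Finset.mem_insert] at hmem
  exact hmem.elim (triangle_lt c k _).ne (Finset.notMem_erase _ _)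

/-- The smaller neighbours of vertex `i` in the canonical graph: the vertices below `D` form a
stacked triangulation, and the remaining vertices a forest consisting of layers of `s` vertices
each. The first layer is attached to `D - 1`, and `p` chooses the parents of the vertices in the
later layers among the vertices of the preceding layer. -/
def backNbrs (D s : ℕ) (c : ℕ → Fin 3) (p : ℕ → Fin s) (i : ℕ) : Finset ℕ :=
  if i < 3 then Finset.range i
  else if i < D then triangleSet c (i - 3)
  else if i < D + s then {D - 1}
  else {D + (i - (D + s)) / s * s + p (i - (D + s))}

lemma backNbrs_triangle {i : ℕ} (hi : i < 3) : backNbrs D s c p i = Finset.range i := if_pos hi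

lemma backNbrs_stack {k : ℕ} (hk : k + 3 < D) : backNbrs D s c p (k + 3) = triangleSet c k := by
  simp [backNbrs, hk]

lemma backNbrs_firstLayer (hD : 3 ≤ D) {r : ℕ} (hr : r < s) :
    backNbrs D s c p (D + r) = {D - 1} := by
  simp [backNbrs, hr, show ¬ D + r < 3 by lia]

lemma backNbrs_layer (hD : 3 ≤ D) (j : ℕ) :
    backNbrs D s c p (D + s + j) = {D + j / s * s + (p j : ℕ)} := by
  simp [backNbrs, show ¬ D + s + j < 3 by lia, show ¬ D + s + j < D by lia]

lemma backNbrs_cases (hD : 3 ≤ D) {Q : ℕ → Finset ℕ → Prop}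
    (triangle : ∀ i < 3, Q i (Finset.range i))
    (stack : ∀ k, k + 3 < D → Q (k + 3) (triangleSet c k)) (firstLayer : ∀ r < s, Q (D + r) {D - 1})
    (layer : ∀ j, Q (D + s + j) {D + j / s * s + (p j : ℕ)}) (i : ℕ) :
    Q i (backNbrs D s c p i) := by
  by_cases hi : i < 3
  · exact backNbrs_triangle hi ▸ triangle i hi
  obtain ⟨k, rfl⟩ := Nat.exists_eq_add_of_le' (not_lt.1 hi)
  by_cases hk : k + 3 < D
  · exact backNbrs_stack hk ▸ stack k hk
  obtain ⟨r, hr⟩ := Nat.exists_eq_add_of_le (not_lt.1 hk)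
  rw [hr]
  by_cases hrs : r < s
  · exact backNbrs_firstLayer hD hrs ▸ firstLayer r hrs
  obtain ⟨j, rfl⟩ := Nat.exists_eq_add_of_le (not_lt.1 hrs)
  rw [← add_assoc]
  exact backNbrs_layer hD j ▸ layer j

/-- The level of a vertex of the canonical graph: the initial triangle has level zero, each stacked
vertex is one level, and each layer of the forest is one level. -/
def stackLevel (D s i : ℕ) : ℕ := min i D - 2 + (i - D) / s

/-- The number of neighbours on lower levels of a vertex at a positive level. -/
def stackWidth (D t : ℕ) : ℕ := if t + 2 < D then 3 else 1

lemma stackLevel_mono (D s : ℕ) : Monotone (stackLevel D s) := fun i j hij ↦ by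
  unfold stackLevel
  gcongr

lemma stackWidth_anti (D : ℕ) : Antitone (stackWidth D) := fun t t' htt' ↦ by
  unfold stackWidth
  split_ifs <;> lia

lemma stackLevel_of_le {i : ℕ} (hi : i ≤ D) : stackLevel D s i = i - 2 := by
  simp [stackLevel, hi]

lemma stackLevel_add (D s j : ℕ) : stackLevel D s (D + j) = D - 2 + j / s := by
  simp [stackLevel]

lemma stackLevel_eq_zero_iff (hD : 3 ≤ D) {i : ℕ} : stackLevel D s i = 0 ↔ i < 3 := by
  rcases le_total i D with hi | hi
  · rw [stackLevel_of_le hi]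
    lia
  · obtain ⟨j, rfl⟩ := Nat.exists_eq_add_of_le hi
    rw [stackLevel_add]
    lia

lemma backNbrs_subset_range (hD : 3 ≤ D) (i : ℕ) : backNbrs D s c p i ⊆ Finset.range i := by
  refine backNbrs_cases hD (Q := fun i B ↦ B ⊆ Finset.range i) (fun i _ ↦ subset_rfl)
    (fun k _ ↦ triangleSet_subset_range c k) (fun r _ ↦ ?_) (fun j ↦ ?_) i <;>
  rw [Finset.singleton_subset_iff, Finset.mem_range]
  · lia
  · have := Nat.div_mul_le_self j s
    have := (p j).2
    lia

lemma stackLevel_parent (j : ℕ) (q : Fin s) :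
    stackLevel D s (D + j / s * s + q) + 1 = stackLevel D s (D + s + j) := by
  rw [add_assoc, add_assoc, stackLevel_add, stackLevel_add, add_comm (_ * s),
    Nat.add_mul_div_right _ _ q.pos, Nat.div_eq_of_lt q.2, Nat.add_div_left _ q.pos]
  lia

lemma stackLevel_backNbrs_lt (hD : 3 ≤ D) (i : ℕ) :
    0 < stackLevel D s i → ∀ x ∈ backNbrs D s c p i, stackLevel D s x < stackLevel D s i := by
  refine backNbrs_cases hD (Q := fun i B ↦ 0 < stackLevel D s i →
    ∀ x ∈ B, stackLevel D s x < stackLevel D s i) ?_ ?_ ?_ ?_ i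
  · intro i hi hpos
    exact absurd ((stackLevel_eq_zero_iff hD).2 hi) hpos.ne'
  · intro k hk _ x hx
    have hxk := Finset.mem_range.1 (triangleSet_subset_range c k hx)
    rw [stackLevel_of_le (by lia), stackLevel_of_le hk.le]
    lia
  · intro r _ _ x hx
    rw [Finset.mem_singleton.1 hx, stackLevel_of_le (by lia), stackLevel_add]
    lia
  · intro j _ x hx
    have := stackLevel_parent (D := D) j (p j)
    rw [Finset.mem_singleton.1 hx]
    lia

lemma exists_mem_backNbrs_stackLevel (hD : 3 ≤ D) (i : ℕ) :
    0 < stackLevel D s i → ∃ x ∈ backNbrs D s c p i, stackLevel D s x + 1 = stackLevel D s i := by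
  refine backNbrs_cases hD (Q := fun i B ↦ 0 < stackLevel D s i →
    ∃ x ∈ B, stackLevel D s x + 1 = stackLevel D s i) ?_ ?_ ?_ ?_ i
  · intro i hi hpos
    exact absurd ((stackLevel_eq_zero_iff hD).2 hi) hpos.ne'
  · intro k hk _
    refine ⟨k + 2, add_two_mem_triangleSet c k, ?_⟩
    rw [stackLevel_of_le (by lia), stackLevel_of_le hk.le]
    lia
  · intro r hr _
    refine ⟨D - 1, Finset.mem_singleton_self _, ?_⟩
    rw [stackLevel_of_le (by lia), stackLevel_add, Nat.div_eq_of_lt hr]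
    lia
  · exact fun j _ ↦ ⟨_, Finset.mem_singleton_self _, stackLevel_parent j (p j)⟩

lemma card_backNbrs (hD : 3 ≤ D) (i : ℕ) :
    0 < stackLevel D s i → (backNbrs D s c p i).card = stackWidth D (stackLevel D s i) := by
  refine backNbrs_cases hD (Q := fun i B ↦ 0 < stackLevel D s i →
    B.card = stackWidth D (stackLevel D s i)) ?_ ?_ ?_ ?_ i
  · intro i hi hpos
    exact absurd ((stackLevel_eq_zero_iff hD).2 hi) hpos.ne'
  · intro k hk _
    rw [card_triangleSet, stackLevel_of_le hk.le, stackWidth, if_pos (by lia)]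
  · intro r _ _
    rw [Finset.card_singleton, stackLevel_add, stackWidth, if_neg (by lia)]
  · intro j _
    rw [Finset.card_singleton, add_assoc, stackLevel_add, stackWidth, if_neg (by lia)]

lemma backGraph_backNbrs_adj (hD : 3 ≤ D) {x i : ℕ} (hx : x ∈ backNbrs D s c p i) :
    (backGraph (backNbrs D s c p)).Adj x i :=
  backGraph_adj_of_mem (backNbrs_subset_range hD) hx

lemma isClique_triangleSet (hD : 3 ≤ D) {k : ℕ} (hk : k + 3 ≤ D) :
    (backGraph (backNbrs D s c p)).IsClique (triangleSet c k : Set ℕ) := by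
  induction k with
  | zero =>
    have hadj : ∀ x y : Fin 3, x < y → (backGraph (backNbrs D s c p)).Adj x y := fun x y hxy ↦
      backGraph_backNbrs_adj hD (by simpa [backNbrs_triangle y.2] using hxy)
    simp only [triangleSet, triangle, Finset.coe_image, Finset.coe_univ, Set.image_univ]
    rintro _ ⟨x, rfl⟩ _ ⟨y, rfl⟩ hxy
    rcases lt_or_gt_of_ne hxy with h | h
    · exact hadj x y h
    · exact (hadj y x h).symm
  | succ k ih =>
    rw [triangleSet_succ, Finset.coe_insert]
    refine ((ih (by lia)).subset (Finset.coe_subset.2 (Finset.erase_subset _ _))).insert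
      fun x hx _ ↦ (backGraph_backNbrs_adj hD ?_).symm
    rw [backNbrs_stack (by lia)]
    exact Finset.mem_of_mem_erase hx

lemma isFaceLike_triangleSet (hD : 3 ≤ D) {k : ℕ} (hk : k + 3 ≤ D) :
    IsFaceLike (backGraph (backNbrs D s c p)) (Set.Iio (k + 3)) (triangleSet c k) := by
  induction k with
  | zero =>
    rw [← Finset.coe_range]
    exact isFaceLike_of_card_lt_five _ _ (by simp)
  | succ k ih =>
    rw [triangleSet_succ, add_right_comm, ← Order.succ_eq_add_one, Order.Iio_succ_eq_insert]
    refine (ih (by lia)).insert (fun x hx ↦ ?_) (isClique_triangleSet hD (by lia))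
      (card_triangleSet c k).le (triangle_mem_triangleSet c k (c k))
    have := (backGraph_adj_of_lt hx.2).1 hx.1.symm
    rwa [backNbrs_stack (by lia)] at this

lemma isClique_backNbrs (hD : 3 ≤ D) (i : ℕ) :
    (backGraph (backNbrs D s c p)).IsClique (backNbrs D s c p i : Set ℕ) := by
  refine backNbrs_cases hD (Q := fun _ B ↦ (backGraph (backNbrs D s c p)).IsClique (B : Set ℕ))
    (fun i hi ↦ ?_) (fun k hk ↦ isClique_triangleSet hD hk.le) (fun r _ ↦ by simp)
    (fun j ↦ by simp) i
  refine (isClique_triangleSet (k := 0) hD hD).subset (Finset.coe_subset.2 fun x hx ↦ ?_)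
  exact triangle_mem_triangleSet c 0 ⟨x, (Finset.mem_range.1 hx).trans hi⟩

lemma card_backNbrs_le (hD : 3 ≤ D) (i : ℕ) : (backNbrs D s c p i).card ≤ 3 :=
  backNbrs_cases hD (Q := fun _ B ↦ B.card ≤ 3) (fun i hi ↦ (Finset.card_range i).trans_le hi.le)
    (fun k _ ↦ (card_triangleSet c k).le) (fun r _ ↦ by simp) (fun j ↦ by simp) i

lemma isFaceLike_backNbrs (hD : 3 ≤ D) (i : ℕ) :
    IsFaceLike (backGraph (backNbrs D s c p)) (Set.Iio i) (backNbrs D s c p i) :=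
  backNbrs_cases hD
    (Q := fun i B ↦ IsFaceLike (backGraph (backNbrs D s c p)) (Set.Iio i) (B : Set ℕ))
    (fun i hi ↦ isFaceLike_of_card_le_two _ _
      ((Finset.card_range i).trans_le (Nat.le_of_lt_succ hi)))
    (fun _ hk ↦ isFaceLike_triangleSet hD hk.le) (fun _ _ ↦ isFaceLike_of_card_le_two _ _ (by simp))
    (fun _ ↦ isFaceLike_of_card_le_two _ _ (by simp)) i

lemma sum_card_backNbrs (hD : 3 ≤ D) (hn : D ≤ n) :
    ∑ i ∈ Finset.range n, (backNbrs D s c p i).card + 6 = n + 2 * D := by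
  have hstack : ∀ k, k + 3 ≤ D → ∑ i ∈ Finset.range (k + 3), (backNbrs D s c p i).card + 6 =
      3 * (k + 3) := by
    intro k hk
    induction k with
    | zero => simp [Finset.sum_range_succ, backNbrs_triangle]
    | succ k ih =>
      rw [add_right_comm, Finset.sum_range_succ, backNbrs_stack (by lia), card_triangleSet]
      lia
  induction n, hn using Nat.le_induction with
  | base =>
    obtain ⟨k, rfl⟩ := Nat.exists_eq_add_of_le' hD
    rw [hstack k le_rfl]
    lia
  | succ i hi ih =>
    have hpos : 0 < stackLevel D s i :=
      Nat.pos_of_ne_zero fun h ↦ ((stackLevel_eq_zero_iff hD).1 h).not_ge (hD.trans hi)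
    obtain ⟨j, rfl⟩ := Nat.exists_eq_add_of_le hi
    rw [Finset.sum_range_succ, card_backNbrs hD _ hpos, stackLevel_add, stackWidth, if_neg (by lia)]
    lia

lemma labelledGraph_backNbrs_mem_planarSet {m : ℕ} (hD : 3 ≤ D) (hn : D ≤ n)
    (hm : m + 6 = n + 2 * D) (σ : Equiv.Perm (Fin n)) :
    labelledGraph (backNbrs D s c p) σ ∈ planarSet n m := by
  refine ⟨isPlanar_labelledGraph (isPlanar_induce_backGraph (isClique_backNbrs hD)
    (card_backNbrs_le hD) (isFaceLike_backNbrs hD) n) σ, ?_⟩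
  have := sum_card_backNbrs (c := c) (p := p) hD hn
  rw [edgeCount_labelledGraph (backNbrs_subset_range hD)]
  lia

lemma corner_eq_of_backNbrs_eq (h : ∀ i < D, backNbrs D s c p i = backNbrs D s c' p' i) {k : ℕ}
    (hk : k + 4 < D) : c k = c' k := by
  have hset : ∀ k, k + 3 < D → triangleSet c k = triangleSet c' k := fun k hk ↦ by
    simpa only [backNbrs_stack hk] using h _ hk
  have htriangle : ∀ k, k + 3 < D → triangle c k = triangle c' k := by
    intro k hk
    induction k with
    | zero => rfl
    | succ k ih =>
      have ih := ih (by lia)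
      rw [triangle, triangle, ih, apply_eq_of_triangleSet_succ_eq ih (hset _ hk)]
  exact apply_eq_of_triangleSet_succ_eq (htriangle k (by lia)) (hset _ (by lia))

lemma parent_eq_of_backNbrs_eq (hD : 3 ≤ D) {j : ℕ}
    (h : backNbrs D s c p (D + s + j) = backNbrs D s c' p' (D + s + j)) : p j = p' j := by
  rw [backNbrs_layer hD, backNbrs_layer hD, Finset.singleton_inj] at h
  exact Fin.ext (Nat.add_left_cancel h)

end StackedForest

/-! ### Counting the labelled graphs -/

section Counting

lemma ncard_levelPreserving_le {α : Type*} [Finite α] {f : α → ℕ} {w : ℕ → ℕ} {T : ℕ}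
    (hf : ∀ v, f v < T) (hw : ∀ t, {v | f v = t}.ncard ≤ w t) :
    {g : Equiv.Perm α | ∀ v, f (g v) = f v}.ncard ≤ ∏ t ∈ Finset.range T, (w t).factorial := by
  classical
  have := Fintype.ofFinite α
  have hstab : {g : Equiv.Perm α | ∀ v, f (g v) = f v} = {g : Equiv.Perm α | f ∘ g = f} :=
    Set.ext fun g ↦ funext_iff.symm
  rw [hstab, ← Nat.card_coe_set_eq, Nat.card_eq_fintype_card]
  calc Fintype.card {g : Equiv.Perm α // f ∘ g = f}
      = ∏ t ∈ Finset.univ.image f, (Fintype.card {v // f v = t}).factorial :=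
        DomMulAct.stabilizer_card' f
    _ ≤ ∏ t ∈ Finset.univ.image f, (w t).factorial := by
        refine Finset.prod_le_prod' fun t _ ↦ Nat.factorial_le ?_
        rw [← Nat.card_eq_fintype_card]
        exact hw t
    _ ≤ ∏ t ∈ Finset.range T, (w t).factorial := by
        refine Finset.prod_le_prod_of_subset_of_one_le' ?_ fun t _ _ ↦ Nat.one_le_iff_ne_zero.2
          (w t).factorial_ne_zero
        simpa [Finset.subset_iff] using hf

variable {D s n m : ℕ}

/-- A bound on the number of vertices of level `t` in the canonical graph. -/
def levelSize (D s t : ℕ) : ℕ := if t = 0 then 3 else if t + 2 < D then 1 else s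

lemma ncard_stackLevel_eq_le (hD : 3 ≤ D) (hs : 0 < s) (t : ℕ) :
    {v : Fin n | stackLevel D s v = t}.ncard ≤ levelSize D s t := by
  suffices h : ∃ B : Finset ℕ, B.card ≤ levelSize D s t ∧ ∀ i, stackLevel D s i = t → i ∈ B by
    obtain ⟨B, hB, hmem⟩ := h
    rw [← Set.ncard_coe_finset] at hB
    exact (Set.ncard_le_ncard_of_injOn Fin.val (fun v hv ↦ hmem v hv)
      Fin.val_injective.injOn).trans hB
  unfold levelSize
  split_ifs with ht htD
  · exact ⟨Finset.range 3, by simp,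
      fun i hi ↦ Finset.mem_range.2 ((stackLevel_eq_zero_iff hD).1 (hi.trans ht))⟩
  · refine ⟨{t + 2}, by simp, fun i hi ↦ Finset.mem_singleton.2 ?_⟩
    rcases le_total i D with hiD | hiD
    · rw [stackLevel_of_le hiD] at hi
      lia
    · obtain ⟨j, rfl⟩ := Nat.exists_eq_add_of_le hiD
      rw [stackLevel_add] at hi
      lia
  · obtain ⟨q, rfl⟩ : ∃ q, t = D - 2 + q := Nat.exists_eq_add_of_le (by lia)
    refine ⟨Finset.Ico (D + q * s) (D + q * s + s), by simp, fun i hi ↦ Finset.mem_Ico.2 ?_⟩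
    have hiD : D ≤ i := by
      by_contra! h
      rw [stackLevel_of_le h.le] at hi
      lia
    obtain ⟨j, rfl⟩ := Nat.exists_eq_add_of_le hiD
    rw [stackLevel_add, Nat.add_left_cancel_iff] at hi
    have := (Nat.div_eq_iff hs).1 hi
    lia

lemma prod_factorial_levelSize (hD : 3 ≤ D) (k : ℕ) :
    ∏ t ∈ Finset.range (D - 2 + k), (levelSize D s t).factorial = 6 * s.factorial ^ k := by
  obtain ⟨d, rfl⟩ := Nat.exists_eq_add_of_le' hD
  have hstack : ∀ t ∈ Finset.range d, (levelSize (d + 3) s (t + 1)).factorial = 1 := by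
    intro t ht
    simp [levelSize, Finset.mem_range.1 ht]
  have hforest : ∀ q ∈ Finset.range k, (levelSize (d + 3) s (d + 1 + q)).factorial =
      s.factorial := by
    intro q _
    rw [levelSize, if_neg (by lia), if_neg (by lia)]
  rw [show d + 3 - 2 = d + 1 by lia, Finset.prod_range_add, Finset.prod_range_succ',
    Finset.prod_eq_one hstack, Finset.prod_congr rfl hforest, Finset.prod_const, Finset.card_range,
    one_mul]
  rfl

lemma ncard_stackLevelPreserving_le (hD : 3 ≤ D) (hn : D ≤ n) (hs : 0 < s) :
    {g : Equiv.Perm (Fin n) | ∀ v, stackLevel D s (g v) = stackLevel D s v}.ncard ≤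
      6 * s.factorial ^ ((n - D) / s + 1) := by
  rw [← prod_factorial_levelSize hD]
  refine ncard_levelPreserving_le (f := fun v : Fin n ↦ stackLevel D s v) (fun v ↦ ?_)
    (ncard_stackLevel_eq_le hD hs)
  have := stackLevel_mono D s v.2.le
  obtain ⟨j, rfl⟩ := Nat.exists_eq_add_of_le hn
  rw [stackLevel_add] at this
  rw [Nat.add_sub_cancel_left]
  lia

lemma factorial_mul_pow_le_ncard_planarSet (hD : 3 ≤ D) (hn : D ≤ n) (hs : 0 < s)
    (hm : m + 6 = n + 2 * D) :
    n.factorial * (3 ^ (D - 4) * s ^ (n - (D + s))) ≤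
      (planarSet n m).ncard * n ^ 3 * (6 * s.factorial ^ ((n - D) / s + 1)) := by
  have : NeZero s := ⟨hs.ne'⟩
  let corners (x : (Fin (D - 4) → Fin 3) × (Fin (n - (D + s)) → Fin s)) : ℕ → Fin 3 :=
    Function.extend Fin.val x.1 0
  let parents (x : (Fin (D - 4) → Fin 3) × (Fin (n - (D + s)) → Fin s)) : ℕ → Fin s :=
    Function.extend Fin.val x.2 0
  have hinj : ∀ x y, (∀ i < n, backNbrs D s (corners x) (parents x) i =
      backNbrs D s (corners y) (parents y) i) → x = y := by
    intro x y h
    refine Prod.ext (funext fun k ↦ ?_) (funext fun j ↦ ?_)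
    · simpa [corners, Fin.val_injective.extend_apply] using
        corner_eq_of_backNbrs_eq (fun i hi ↦ h i (hi.trans_le hn)) (k := k) (by lia)
    · simpa [parents, Fin.val_injective.extend_apply] using
        parent_eq_of_backNbrs_eq hD (h (D + s + j) (by lia))
  have := factorial_mul_card_le (stackWidth_anti D) (hD.trans hn)
    (fun i ↦ stackLevel_eq_zero_iff (s := s) hD) (fun x ↦ backNbrs_subset_range hD) hinj
    (fun x ↦ isLayering_labelledGraph (stackLevel_mono D s) (stackLevel_backNbrs_lt hD)
      (exists_mem_backNbrs_stackLevel hD) (card_backNbrs hD))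
    fun x ↦ labelledGraph_backNbrs_mem_planarSet hD hn hm
  rw [Fintype.card_prod, Fintype.card_fun, Fintype.card_fun, Fintype.card_fin, Fintype.card_fin,
    Fintype.card_fin, Fintype.card_fin] at this
  exact this.trans (Nat.mul_le_mul_left _ (ncard_stackLevelPreserving_le hD hn hs))

lemma ncard_planarSet_succ_le (n m : ℕ) :
    (planarSet n (m + 1)).ncard ≤ (planarSet n m).ncard * n ^ 2 := by
  have hsub : planarSet n (m + 1) ⊆
      ⋃ H ∈ planarSet n m, Set.range fun p : Fin n × Fin n ↦ H ⊔ edge p.1 p.2 := by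
    rintro G ⟨hG, hGm⟩
    obtain ⟨⟨u, v⟩, huv : G.Adj u v⟩ : G.edgeSet.Nonempty :=
      Set.nonempty_of_ncard_ne_zero (hGm.trans_ne m.succ_ne_zero)
    refine Set.mem_biUnion (x := G.deleteEdges {s(u, v)})
      ⟨hG.of_isContained (IsContained.of_le (deleteEdges_le _)), ?_⟩ ⟨(u, v), ?_⟩
    · rw [edgeCount, edgeSet_deleteEdges,
        Set.ncard_sdiff_singleton_of_mem ((mem_edgeSet G).2 huv)]
      exact Nat.sub_eq_of_eq_add hGm
    · exact sdiff_sup_cancel ((edge_le_iff G).2 (Or.inr huv))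
  refine (Set.ncard_le_ncard hsub).trans (ncard_biUnion_le_mul (Set.toFinite _) fun H _ ↦ ?_)
  rw [← Set.image_univ]
  refine le_trans Set.ncard_image_le ?_
  simp [Set.ncard_univ, sq]

lemma exists_factorial_mul_pow_le_ncard_planarSet (hnm : n ≤ m) (hm : m + 6 ≤ 3 * n) (hs : 0 < s) :
    ∃ D ≤ n, n.factorial * (3 ^ (D - 4) * s ^ (n - (D + s))) ≤
      (planarSet n m).ncard * n ^ 5 * (6 * s.factorial ^ ((n - D) / s + 1)) := by
  obtain ⟨D, hD⟩ : ∃ D, D = (m - n + 1) / 2 + 3 := ⟨_, rfl⟩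
  have hround : (planarSet n (n + 2 * D - 6)).ncard ≤ (planarSet n m).ncard * n ^ 2 := by
    obtain h | h : n + 2 * D - 6 = m ∨ n + 2 * D - 6 = m + 1 := by lia
    · exact h ▸ Nat.le_mul_of_pos_right _ (Nat.pow_pos (by lia))
    · exact h ▸ ncard_planarSet_succ_le n m
  refine ⟨D, by lia, (factorial_mul_pow_le_ncard_planarSet (m := n + 2 * D - 6) (by lia) (by lia) hs
    (by lia)).trans (Nat.mul_le_mul_right _ ?_)⟩
  rw [show 5 = 2 + 3 from rfl, pow_add, ← mul_assoc]
  exact Nat.mul_le_mul_right _ hround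

end Counting

/-! ### Asymptotics -/

section Asymptotics

open Topology

lemma pow_mul_factorial_pow_le {D n s : ℕ} {r : ℝ} (hD : D ≤ n) (hs : 0 < s) (hr1 : 1 ≤ r)
    (hr3 : r ≤ 3) (hrs : r ^ s * s.factorial ≤ (s : ℝ) ^ s) :
    r ^ n * (s.factorial : ℝ) ^ ((n - D) / s + 1) ≤
      81 * (s : ℝ) ^ (2 * s) * (3 ^ (D - 4) * (s : ℝ) ^ (n - (D + s))) := by
  set q := (n - D) / s + 1
  have hlt : n - D < s * q := Nat.lt_mul_div_succ _ hs
  have hle : s * q ≤ n - D + s := Nat.add_le_add_right (Nat.mul_div_le _ _) s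
  have hs1 : (1 : ℝ) ≤ s := by exact_mod_cast hs
  calc r ^ n * (s.factorial : ℝ) ^ q
      ≤ r ^ (D + s * q) * (s.factorial : ℝ) ^ q := by
        gcongr
        lia
    _ = r ^ D * (r ^ s * s.factorial) ^ q := by ring
    _ ≤ 3 ^ D * ((s : ℝ) ^ s) ^ q := by gcongr
    _ = 3 ^ D * (s : ℝ) ^ (s * q) := by rw [pow_mul]
    _ ≤ 3 ^ (4 + (D - 4)) * (s : ℝ) ^ (2 * s + (n - (D + s))) := by
        gcongr
        · norm_num
        · lia
        · lia
    _ = 81 * (s : ℝ) ^ (2 * s) * (3 ^ (D - 4) * (s : ℝ) ^ (n - (D + s))) := by ring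

lemma pow_mul_factorial_le_ncard_planarSet {n m s : ℕ} {r : ℝ} (hnm : n ≤ m)
    (hm : m + 6 ≤ 3 * n) (hs : 0 < s) (hr1 : 1 ≤ r) (hr3 : r ≤ 3)
    (hrs : r ^ s * s.factorial ≤ (s : ℝ) ^ s) :
    r ^ n * n.factorial ≤ 486 * (s : ℝ) ^ (2 * s) * (n : ℝ) ^ 5 * (planarSet n m).ncard := by
  obtain ⟨D, hD, hcount⟩ := exists_factorial_mul_pow_le_ncard_planarSet hnm hm hs
  have hpow := pow_mul_factorial_pow_le hD hs hr1 hr3 hrs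
  set q := (n - D) / s + 1
  refine le_of_mul_le_mul_right ?_ (by positivity : (0 : ℝ) < (s.factorial : ℝ) ^ q)
  calc r ^ n * n.factorial * (s.factorial : ℝ) ^ q
      = n.factorial * (r ^ n * (s.factorial : ℝ) ^ q) := by ring
    _ ≤ n.factorial * (81 * (s : ℝ) ^ (2 * s) * (3 ^ (D - 4) * (s : ℝ) ^ (n - (D + s)))) := by
        gcongr
    _ = 81 * (s : ℝ) ^ (2 * s) * (n.factorial * (3 ^ (D - 4) * (s : ℝ) ^ (n - (D + s)))) := by ring
    _ ≤ 81 * (s : ℝ) ^ (2 * s) *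
          ((planarSet n m).ncard * (n : ℝ) ^ 5 * (6 * (s.factorial : ℝ) ^ q)) := by
        gcongr _ * ?_
        exact_mod_cast hcount
    _ = 486 * (s : ℝ) ^ (2 * s) * (n : ℝ) ^ 5 * (planarSet n m).ncard *
          (s.factorial : ℝ) ^ q := by ring

lemma tendsto_pow_mul_factorial_div_pow_self {r : ℝ} (hr0 : 0 ≤ r) (hr : r < Real.exp 1) :
    Tendsto (fun s : ℕ ↦ r ^ s * s.factorial / (s : ℝ) ^ s) atTop (𝓝 0) := by
  have hroot : Tendsto (fun s : ℕ ↦ √(2 * (s * ((r / Real.exp 1) ^ 2) ^ s))) atTop (𝓝 0) := by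
    have hx : (r / Real.exp 1) ^ 2 < 1 :=
      pow_lt_one₀ (by positivity) ((div_lt_one (Real.exp_pos 1)).2 hr) two_ne_zero
    simpa using ((tendsto_self_mul_const_pow_of_lt_one (sq_nonneg _) hx).const_mul 2).sqrt
  have hprod := Stirling.tendsto_stirlingSeq_sqrt_pi.mul hroot
  rw [mul_zero] at hprod
  refine hprod.congr' ?_
  filter_upwards [eventually_gt_atTop 0] with s hs
  rw [← mul_assoc, pow_right_comm, Real.sqrt_mul (by positivity), Real.sqrt_sq (by positivity),
    Stirling.stirlingSeq]
  simp only [div_pow]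
  field_simp

lemma exists_pow_mul_factorial_le_pow_self {r : ℝ} (hr0 : 0 ≤ r) (hr : r < Real.exp 1) :
    ∃ s : ℕ, 0 < s ∧ r ^ s * s.factorial ≤ (s : ℝ) ^ s := by
  obtain ⟨s, hlt, hs⟩ := (((tendsto_pow_mul_factorial_div_pow_self hr0 hr).eventually_lt_const
    one_pos).and (eventually_gt_atTop 0)).exists
  exact ⟨s, hs, ((div_lt_one (by positivity)).1 hlt).le⟩

lemma le_liminf_rpow_inv {a : ℕ → ℝ} {r C : ℝ} {k : ℕ} (hr : 0 ≤ r) (hC : 0 < C)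
    (ha : ∀ᶠ n : ℕ in atTop, r ^ n ≤ C * (n : ℝ) ^ k * a n)
    (hcob : IsCoboundedUnder (· ≥ ·) atTop fun n : ℕ ↦ a n ^ ((n : ℝ)⁻¹)) :
    r ≤ liminf (fun n : ℕ ↦ a n ^ ((n : ℝ)⁻¹)) atTop := by
  have hlim : Tendsto (fun n : ℕ ↦ r / (C ^ ((n : ℝ)⁻¹) * (n : ℝ) ^ ((k : ℝ) / (1 * n + 0)))) atTop
      (𝓝 r) := by
    have hconst : Tendsto (fun n : ℕ ↦ C ^ ((n : ℝ)⁻¹)) atTop (𝓝 1) := by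
      simpa [Function.comp_def] using ((Real.continuous_const_rpow hC.ne').tendsto 0).comp
        (tendsto_inv_atTop_nhds_zero_nat (𝕜 := ℝ))
    have hpoly : Tendsto (fun n : ℕ ↦ (n : ℝ) ^ ((k : ℝ) / (1 * n + 0))) atTop (𝓝 1) :=
      (tendsto_rpow_div_mul_add k 1 0 zero_ne_one).comp tendsto_natCast_atTop_atTop
    simpa [Pi.div_def] using tendsto_const_nhds.div (hconst.mul hpoly) (by norm_num)
  rw [← hlim.liminf_eq]
  refine liminf_le_liminf ?_ hlim.isBoundedUnder_ge hcob
  filter_upwards [ha, eventually_gt_atTop 0] with n han hn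
  have hroot : r / (C ^ ((n : ℝ)⁻¹) * (n : ℝ) ^ ((k : ℝ) / (1 * n + 0))) =
      (r ^ n / (C * (n : ℝ) ^ k)) ^ ((n : ℝ)⁻¹) := by
    rw [Real.div_rpow (by positivity) (by positivity), Real.mul_rpow hC.le (by positivity),
      Real.pow_rpow_inv_natCast hr hn.ne', ← Real.rpow_natCast_mul (by positivity), one_mul,
      add_zero, div_eq_mul_inv (k : ℝ)]
  rw [hroot]
  exact Real.rpow_le_rpow (by positivity) ((div_le_iff₀' (by positivity)).2 han) (by positivity)

lemma ncard_planarSet_le (n m : ℕ) :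
    (planarSet n m).ncard ≤ n.factorial * 2 ^ (growthExponent 5 * n) :=
  (Set.ncard_le_ncard fun _ hG ↦ hG.1.1).trans (ncard_completeMinorFree_le 5 n)

lemma isCoboundedUnder_ge_growth (m : ℕ → ℕ) :
    IsCoboundedUnder (· ≥ ·) atTop fun n : ℕ ↦
      (((planarSet n (m n)).ncard : ℝ) / n.factorial) ^ ((n : ℝ)⁻¹) := by
  refine IsBoundedUnder.isCoboundedUnder_ge ⟨2 ^ growthExponent 5, ?_⟩
  rw [eventually_map]
  filter_upwards [eventually_gt_atTop 0] with n hn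
  have hle : ((planarSet n (m n)).ncard : ℝ) / n.factorial ≤ (2 ^ growthExponent 5) ^ n := by
    rw [div_le_iff₀' (by positivity), ← pow_mul]
    exact_mod_cast ncard_planarSet_le n (m n)
  rw [← Real.pow_rpow_inv_natCast (x := 2 ^ growthExponent 5) (by positivity) hn.ne']
  exact Real.rpow_le_rpow (by positivity) hle (by positivity)

end Asymptotics

theorem growth_liminf (m : ℕ → ℕ)
    (hm : ∀ᶠ n : ℕ in atTop, n ≤ m n ∧ (m n : ℝ) ≤ 3 * (n : ℝ) - 6) :
    Real.exp 1 ≤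
      liminf (fun n : ℕ =>
        (((planarSet n (m n)).ncard : ℝ) / (Nat.factorial n : ℝ)) ^ ((n : ℝ)⁻¹)) atTop := by
  refine le_of_forall_lt_imp_le_of_dense fun r hr ↦ (le_max_left r 1).trans ?_
  have hr_exp : max r 1 < Real.exp 1 := max_lt hr (Real.one_lt_exp_iff.2 one_pos)
  have hr_three : max r 1 ≤ 3 := hr_exp.le.trans Real.exp_one_lt_three.le
  obtain ⟨s, hs, hrs⟩ := exists_pow_mul_factorial_le_pow_self (by positivity) hr_exp
  refine le_liminf_rpow_inv (C := 486 * (s : ℝ) ^ (2 * s)) (k := 5) (by positivity) (by positivity)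
    ?_ (isCoboundedUnder_ge_growth m)
  filter_upwards [hm] with n ⟨hnm, hmn⟩
  have hmn' : m n + 6 ≤ 3 * n := by exact_mod_cast le_sub_iff_add_le.1 hmn
  rw [← mul_div_assoc, le_div_iff₀ (by positivity)]
  exact pow_mul_factorial_le_ncard_planarSet hnm hmn' hs (le_max_right r 1) hr_three hrs
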